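/- arXiv:1509.02013 — 6 statements merged into one kernel-verified Lean document; each statement's English description precedes it below -/
import Mathlib

section
/- Let p be an odd prime and define c_p = 1/(2^{p²} p² (p² − 1)) + 1/(2^p p²) + (1/(2^{p²}(p² − 1))) · ∑_{d ∣ p²−1, d ≠ 1} 2^{(p²−1)(d−1)/d} φ(d), where φ is Euler's totient function. For each ν ≥ 1 let q = p^{2ν}, let F_q be the finite field with q elements, and let N_ν be the number of pairs (a₀, a₁) ∈ F_q × F_q such that T^{p²} + a₁T + a₀ is a sum of two squares. Then N_ν / q² converges to c_p as ν → ∞. -/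
/-- The constant `c_p` from the paper. -/
noncomputable def landauShortIntervalConstant (p : ℕ) : ℝ :=
  1 / (2 ^ (p ^ 2) * (p : ℝ) ^ 2 * ((p : ℝ) ^ 2 - 1)) +
  1 / (2 ^ p * (p : ℝ) ^ 2) +
  (1 / (2 ^ (p ^ 2) * ((p : ℝ) ^ 2 - 1))) *
    ∑ d ∈ (p ^ 2 - 1).divisors.erase 1,
      (2 : ℝ) ^ ((p ^ 2 - 1) * (d - 1) / d) * (Nat.totient d : ℝ)

namespace LSI
open Polynomial

section Stepanov

variable {F : Type*} [Field F]

/-- polynomial of degree `< K` with given coefficients -/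
noncomputable def pol {K : ℕ} (a : Fin K → F) : F[X] := ((degreeLTEquiv F K).symm a : F[X])

lemma pol_add {K : ℕ} (a b : Fin K → F) : pol (a + b) = pol a + pol b := by
  simp [pol]

lemma pol_sub {K : ℕ} (a b : Fin K → F) : pol (a - b) = pol a - pol b := by
  simp [pol]

lemma pol_eq_zero {K : ℕ} {a : Fin K → F} (h : pol a = 0) : a = 0 := by
  have : (degreeLTEquiv F K).symm a = 0 := Subtype.ext h
  simpa using this

lemma pol_degree {K : ℕ} (a : Fin K → F) : (pol a).degree < K :=
  mem_degreeLT.1 ((degreeLTEquiv F K).symm a).2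

lemma pol_natDegree {K : ℕ} (a : Fin (K+1) → F) : (pol a).natDegree ≤ K := by
  have := pol_degree a
  by_cases h : pol a = 0
  · simp [h]
  · rw [degree_eq_natDegree h] at this
    have := Nat.cast_lt.1 this
    omega

/-- base `X^Q` expansion is unique -/
lemma bivariate_zero (Q : ℕ) (G : F[X][X]) (hG : ∀ i, (G.coeff i).degree < Q)
    (h : G.eval (X ^ Q) = 0) : G = 0 := by
  induction hn : G.natDegree using Nat.strong_induction_on generalizing G with
  | _ n ih =>
    have h0 : G.coeff 0 = 0 := by
      have h1 : (X : F[X]) ^ Q ∣ G.coeff 0 := by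
        have := congrArg (eval (X ^ Q)) (divX_mul_X_add G)
        rw [h] at this
        simp only [eval_add, eval_mul, eval_X, eval_C] at this
        refine ⟨-(eval (X ^ Q) G.divX), ?_⟩
        linear_combination this
      apply eq_zero_of_dvd_of_degree_lt h1
      simpa using hG 0
    have hd : G = G.divX * X := by
      conv_lhs => rw [← divX_mul_X_add G]
      simp [h0]
    by_cases hn0 : n = 0
    · rw [eq_C_of_natDegree_eq_zero (hn.trans hn0), h0, C_0]
    have : G.divX = 0 := by
      apply ih (G.divX.natDegree) _ _ _ _ rfl
      · rw [natDegree_divX_eq_natDegree_tsub_one]; omega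
      · intro i; rw [coeff_divX]; exact hG _
      · rw [hd] at h
        simp only [eval_mul, eval_X] at h
        exact (mul_eq_zero.1 h).resolve_right (pow_ne_zero _ X_ne_zero)
    rw [hd, this, zero_mul]

lemma not_square_ratio (f s t : F[X]) (hf : Squarefree f) (hd : 0 < f.natDegree) (c : F) (hc : c ≠ 0)
    (hs : s ≠ 0) (h : f * C c * s ^ 2 = t ^ 2) : False := by
  have h1 : s ^ 2 ∣ t ^ 2 := ⟨f * C c, by rw [← h]; ring⟩
  have h2 : s ∣ t := by
    exact (IsIntegrallyClosed.pow_dvd_pow_iff two_ne_zero).1 h1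
  obtain ⟨r, rfl⟩ := h2
  have h3 : f * C c = r * r := by
    have : s ^ 2 * (f * C c) = s ^ 2 * (r * r) := by linear_combination h
    exact mul_left_cancel₀ (pow_ne_zero _ hs) this
  have h4 : r * r ∣ f := by
    refine ⟨C c⁻¹, ?_⟩
    rw [← h3, mul_assoc, ← C_mul, mul_inv_cancel₀ hc]; simp
  have h5 := hf r h4
  have h6 : IsUnit f := by
    have : IsUnit (f * C c) := by rw [h3]; exact h5.mul h5
    exact isUnit_of_mul_isUnit_left this
  have := natDegree_eq_zero_of_isUnit h6
  omega

variable [Fintype F]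

lemma aux_nonzero (p s J K D : ℕ) [Fact p.Prime] [CharP F p] (hp : Odd p)
    (f : F[X]) (hf : Squarefree f) (hd : 0 < f.natDegree) (hD : f.natDegree ≤ D)
    (hQ : 2 * K + D < p ^ s) (a b : Fin J → Fin (K+1) → F) 
    (h : ∑ j, (pol (a j) + pol (b j) * f ^ ((p ^ s + 1) / 2)) * X ^ (p ^ s * j.val) = 0) :
    a = 0 ∧ b = 0 := by
  set Q := p ^ s with hQdef
  set PP : F[X][X] := ∑ j : Fin J, C (pol (a j)) * X ^ j.val with hPP
  set SS : F[X][X] := ∑ j : Fin J, C (pol (b j)) * X ^ j.val with hSS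
  have hcoefP : ∀ (a : Fin J → Fin (K+1) → F) i, ((∑ j : Fin J, C (pol (a j)) * X ^ j.val : F[X][X]).coeff i).natDegree ≤ K := by
    intro a i
    rw [finsetSum_coeff]
    apply natDegree_sum_le_of_forall_le
    intro j _
    rw [coeff_C_mul, coeff_X_pow]
    split_ifs
    · simpa using pol_natDegree _
    · simp
  have hinj : ∀ (a : Fin J → Fin (K+1) → F), (∑ j : Fin J, C (pol (a j)) * X ^ j.val : F[X][X]) = 0 → a = 0 := by
    intro a h
    funext j
    apply pol_eq_zero
    have := congrArg (fun q => q.coeff j.val) h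
    simp only [finsetSum_coeff, coeff_C_mul, coeff_X_pow, coeff_zero] at this
    rw [Finset.sum_eq_single j] at this
    · simpa using this
    · intro i _ hij
      have : j.val ≠ i.val := fun h => hij (Fin.ext h.symm)
      simp [this]
    · simp
  set f2 : F[X] := f.map (iterateFrobenius F p s) with hf2
  have hf2Q : f2.comp (X ^ Q) = f ^ Q := by
    rw [hf2, ← expand_eq_comp_X_pow, hQdef, ← map_expand, map_iterateFrobenius_expand]
  have hodd : Odd Q := hp.pow
  have hPS : PP.eval (X ^ Q) + SS.eval (X ^ Q) * f ^ ((Q + 1) / 2) = 0 := by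
    rw [hPP, hSS, eval_finsetSum, eval_finsetSum, Finset.sum_mul, ← Finset.sum_add_distrib, ← h]
    apply Finset.sum_congr rfl
    intro j _
    simp only [eval_mul, eval_C, eval_pow, eval_X, ← pow_mul]
    ring
  set G : F[X][X] := PP ^ 2 - C f * f2.map C * SS ^ 2 with hGdef
  have hG : G = 0 := by
    apply bivariate_zero Q
    · intro i
      have hN : (G.coeff i).natDegree ≤ 2 * K + D := by
        rw [hGdef, coeff_sub]
        apply (natDegree_sub_le _ _).trans
        have key : ∀ (A : F[X][X]), (∀ i, (A.coeff i).natDegree ≤ K) → ∀ i, ((A ^ 2).coeff i).natDegree ≤ 2 * K := by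
          intro A hA i
          rw [pow_two, coeff_mul]
          apply natDegree_sum_le_of_forall_le
          intro x _
          apply natDegree_mul_le.trans
          have := hA x.1
          have := hA x.2
          omega
        apply max_le
        · have := key PP (hcoefP a) i
          omega
        · rw [mul_assoc, coeff_C_mul, coeff_mul, Finset.mul_sum]
          apply natDegree_sum_le_of_forall_le
          intro x _
          rw [coeff_map]
          apply natDegree_mul_le.trans
          have h1 := (natDegree_C_mul_le (f2.coeff x.1) ((SS ^ 2).coeff x.2))
          have h2 := key SS (hcoefP b) x.2
          omega
      apply (degree_le_natDegree).trans_lt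
      exact_mod_cast lt_of_le_of_lt hN hQ
    · have e1 : PP.eval (X ^ Q) = - (SS.eval (X ^ Q) * f ^ ((Q + 1) / 2)) := by linear_combination hPS
      have e2 : (f2.map C).eval (X ^ Q) = f ^ Q := by
        rw [← hf2Q, comp, eval_map]
      rw [hGdef, eval_sub, eval_pow, eval_mul, eval_mul, eval_C, eval_pow, e1, e2]
      have e3 : f ^ ((Q + 1) / 2) * f ^ ((Q + 1) / 2) = f * f ^ Q := by
        rw [← pow_add, ← pow_succ']
        congr 1
        obtain ⟨k, hk⟩ := hodd
        omega
      linear_combination (eval (X^Q) SS)^2 * e3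
  have hG' : PP ^ 2 = C f * f2.map C * SS ^ 2 := sub_eq_zero.1 hG
  have hf0 : f ≠ 0 := hf.ne_zero
  by_cases hS : SS = 0
  · refine ⟨hinj a ?_, hinj b hS⟩
    rw [hS] at hG'
    simpa using hG'
  · exfalso
    have := congrArg leadingCoeff hG'
    simp only [leadingCoeff_pow, leadingCoeff_mul, leadingCoeff_C] at this
    rw [leadingCoeff_map_of_injective C_injective] at this
    refine not_square_ratio f SS.leadingCoeff PP.leadingCoeff hf hd f2.leadingCoeff ?_ ?_ this.symm
    · rw [hf2, leadingCoeff_map]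
      simpa using hf0
    · simpa using hS

theorem stepanov (p m s : ℕ) [Fact p.Prime] [CharP F p] (hp : Odd p)
    (hcard : Fintype.card F = p ^ (m + s))
    (f : F[X]) (hf : Squarefree f) (hd : 0 < f.natDegree) (D : ℕ) (hD : f.natDegree ≤ D)
    (hQ : (D + 1) * (p ^ m + 1) + D + 2 ≤ p ^ s) (S : Finset F)
    (hS : ∀ x ∈ S, f.eval x ^ ((p ^ (m + s) - 1) / 2) = 1) :
    2 * S.card ≤ p ^ (m + s) + 2 * (D + 2) * p ^ s := by
  obtain ⟨k, hk⟩ : Odd (p ^ m) := hp.pow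
  obtain ⟨l, hl⟩ : Odd (p ^ s) := hp.pow
  set J := k + 1 with hJ
  set K := (D + 1) * J with hK
  set M := p ^ m with hM
  set Q := p ^ s with hQd
  have hqMQ : p ^ (m + s) = M * Q := pow_add _ _ _
  set N := M * (K + 1) + (D + 1) * J with hN
  let T : (Fin J → Fin (K+1) → F) × (Fin J → Fin (K+1) → F) → F[X] := fun ab =>
    ∑ j, (pol (ab.1 j) ^ M + pol (ab.2 j) ^ M * f ^ J) * X ^ j.val
  have hTsub : ∀ x y, T (x - y) = T x - T y := by
    intro x y
    simp only [T, ← Finset.sum_sub_distrib]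
    apply Finset.sum_congr rfl
    intro j _
    simp only [Prod.fst_sub, Prod.snd_sub, Pi.sub_apply, pol_sub]
    rw [hM, sub_pow_char_pow, sub_pow_char_pow]
    ring
  have hTdeg : ∀ x, (T x).natDegree < N := by
    intro x
    have : (T x).natDegree ≤ M * K + D * J + k := by
      apply natDegree_sum_le_of_forall_le
      intro j _
      have h1 : (pol (x.1 j) ^ M).natDegree ≤ M * K := 
        natDegree_pow_le_of_le _ (pol_natDegree _)
      have h2 : (pol (x.2 j) ^ M).natDegree ≤ M * K := 
        natDegree_pow_le_of_le _ (pol_natDegree _)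
      have h3 : (f ^ J).natDegree ≤ D * J := by
        rw [mul_comm]; exact natDegree_pow_le_of_le _ hD
      have h4 := natDegree_mul_le_of_le h2 h3
      have h5 := natDegree_add_le_of_degree_le (h1.trans (Nat.le_add_right _ (D*J))) h4
      refine (natDegree_mul_le_of_le h5 (natDegree_X_pow_le _)).trans ?_
      have := j.2
      omega
    have hM0 : 0 < M := pow_pos (Fact.out : p.Prime).pos _
    have : M * K + D * J + k < N := by
      have e1 : (D + 1) * J = D * J + J := by ring
      have e2 : M * (K + 1) = M * K + M := by ring
      omega
    omega
  obtain ⟨ab, hab0, hab⟩ : ∃ ab, ab ≠ 0 ∧ T ab = 0 := by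
    by_contra! hcon
    have hinj : Function.Injective (fun ab => (fun i : Fin N => (T ab).coeff i)) := by
      intro x y hxy
      by_contra hne
      apply hcon (x - y) (sub_ne_zero.2 hne)
      ext i
      by_cases hi : i < N
      · have := congrFun hxy ⟨i, hi⟩
        rw [hTsub]
        simpa [sub_eq_zero] using this
      · rw [coeff_eq_zero_of_natDegree_lt ((hTdeg _).trans_le (not_lt.1 hi)), coeff_zero]
    have := Fintype.card_le_of_injective _ hinj
    simp only [Fintype.card_prod, Fintype.card_pi, Finset.prod_const, Finset.card_univ, Fintype.card_fin, ← pow_mul, ← pow_add] at this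
    rw [Nat.pow_le_pow_iff_right Fintype.one_lt_card] at this
    have h2 : (K + 1) * J + (K + 1) * J = M * (K + 1) + (K + 1) := by
      rw [hk, hJ]; ring
    rw [h2, hN, ← hK] at this
    omega
  set R : F[X] := ∑ j, (pol (ab.1 j) + pol (ab.2 j) * f ^ ((Q + 1) / 2)) * X ^ (Q * j.val) with hR
  have hR0 : R ≠ 0 := by
    intro h
    have h2KQ : 2 * K + D < p ^ s := by
      have : 2 * K = (D + 1) * (M + 1) := by rw [hK, hk, hJ]; ring
      omega
    have := aux_nonzero p s J K D hp f hf hd hD h2KQ ab.1 ab.2 h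
    exact hab0 (Prod.ext this.1 this.2)
  have hroot : ∀ x ∈ S, R.IsRoot x := by
    intro x hx
    have hxq : x ^ (M * Q) = x := by rw [← hqMQ, ← hcard]; exact FiniteField.pow_card x
    have h1 : R ^ M = ∑ j, (pol (ab.1 j) ^ M + pol (ab.2 j) ^ M * f ^ ((Q + 1) / 2 * M)) * X ^ (M * Q * j.val) := by
      rw [hR, hM, sum_pow_char_pow]
      apply Finset.sum_congr rfl
      intro j _
      rw [mul_pow, add_pow_char_pow, mul_pow, ← pow_mul, ← pow_mul]
      congr 2; ring
    have h2 : (R ^ M).eval x = (T ab).eval x := by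
      rw [h1]
      simp only [T, eval_finsetSum]
      apply Finset.sum_congr rfl
      intro j _
      simp only [eval_mul, eval_add, eval_pow, eval_X]
      rw [pow_mul x, hxq]
      have : (Q + 1) / 2 * M = (p ^ (m+s) - 1) / 2 + J := by
        have e1 : (Q + 1) / 2 = l + 1 := by omega
        have e2 : (p ^ (m + s) - 1) / 2 = 2 * k * l + k + l := by
          rw [hqMQ, hk, hl]
          have : (2 * k + 1) * (2 * l + 1) = 2 * (2 * k * l + k + l) + 1 := by ring
          omega
        rw [e1, e2, hk, hJ]; ring
      rw [this, pow_add, hS x hx, one_mul]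
    rw [hab, eval_zero, eval_pow] at h2
    exact (pow_eq_zero_iff (pow_pos (Fact.out : p.Prime).pos _).ne').1 h2
  have hc : S.card ≤ R.natDegree := by
    by_contra! hlt
    exact hR0 (eq_zero_of_natDegree_lt_card_of_eval_eq_zero' R S hroot hlt)
  have hdegR : R.natDegree ≤ K + D * (l + 1) + Q * k := by
    apply natDegree_sum_le_of_forall_le
    intro j _
    have e1 : (Q + 1) / 2 = l + 1 := by omega
    rw [e1]
    have h3 : (f ^ (l+1)).natDegree ≤ D * (l+1) := by
      rw [mul_comm]; exact natDegree_pow_le_of_le _ hD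
    have h4 := natDegree_mul_le_of_le (pol_natDegree (ab.2 j)) h3
    have h5 := natDegree_add_le_of_degree_le ((pol_natDegree (ab.1 j)).trans (Nat.le_add_right _ (D*(l+1)))) h4
    refine (natDegree_mul_le_of_le h5 (natDegree_X_pow_le _)).trans ?_
    have : j.val ≤ k := by have := j.2; omega
    gcongr
  rw [hqMQ]
  have h2K : 2 * K = (D + 1) * (M + 1) := by rw [hK, hk, hJ]; ring
  have h6 : D * (l + 1) ≤ D * Q := Nat.mul_le_mul_left _ (by omega)
  have h7 : 2 * (Q * k) ≤ M * Q := by rw [hk]; nlinarith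
  nlinarith

end Stepanov
end LSI

namespace LSI
open Polynomial

/-- sum of two squares `A² + T B²` -/
def Good {F : Type*} [Field F] (f : F[X]) : Prop := ∃ A B : F[X], f = A ^ 2 + X * B ^ 2

lemma Good.one {F : Type*} [Field F] : Good (1 : F[X]) := ⟨1, 0, by simp⟩

lemma Good.mul {F : Type*} [Field F] {f g : F[X]} (hf : Good f) (hg : Good g) : Good (f * g) := by
  obtain ⟨A, B, rfl⟩ := hf
  obtain ⟨C, D, rfl⟩ := hg
  exact ⟨A * C - X * B * D, A * D + B * C, by ring⟩

lemma Good.prod {F : Type*} [Field F] {ι : Type*} (s : Finset ι) (P : ι → F[X])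
    (h : ∀ i ∈ s, Good (P i)) : Good (∏ i ∈ s, P i) :=
  Finset.prod_induction P Good (fun _ _ => Good.mul) Good.one h

lemma norm_neg_root {F : Type*} [Field F] (P : F[X]) (hP : P.Monic) [Fact (Irreducible P)] :
    Algebra.norm F (-(AdjoinRoot.root P)) = P.eval 0 := by
  have hpb := Algebra.PowerBasis.norm_gen_eq_coeff_zero_minpoly (AdjoinRoot.powerBasis' hP)
  have h1 : -(AdjoinRoot.root P) = algebraMap F (AdjoinRoot P) (-1) * AdjoinRoot.root P := by simp
  rw [h1, map_mul, Algebra.norm_algebraMap, (AdjoinRoot.powerBasis' hP).finrank]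
  rw [AdjoinRoot.powerBasis'_gen] at hpb
  rw [hpb, ← mul_assoc, ← mul_pow]
  have : minpoly F (AdjoinRoot.root P) = P := by
    rw [AdjoinRoot.minpoly_root hP.ne_zero, hP.leadingCoeff]; simp
  rw [this, coeff_zero_eq_eval_zero]
  simp

lemma isSquare_of_norm {F K : Type*} [Field F] [Finite F] [Field K] [Finite K] [Algebra F K]
    (h2 : ringChar F ≠ 2) (x : K) (h : IsSquare (Algebra.norm F x)) : IsSquare x := by
  by_cases hx : x = 0
  · rw [hx]; exact IsSquare.zero
  have := Fintype.ofFinite F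
  have := Fintype.ofFinite K
  have h2K : ringChar K ≠ 2 := by rwa [← Algebra.ringChar_eq F K]
  have hn : Algebra.norm F x ≠ 0 := Algebra.norm_ne_zero_iff.2 hx
  rw [FiniteField.isSquare_iff h2K hx]
  rw [FiniteField.isSquare_iff h2 hn] at h
  have h3 := congrArg (algebraMap F K) h
  rw [map_pow, FiniteField.algebraMap_norm_eq_pow, ← pow_mul, map_one] at h3
  rw [← h3]
  congr 1
  have o1 := FiniteField.odd_card_of_char_ne_two h2
  have o2 := FiniteField.odd_card_of_char_ne_two h2K
  have hdvd : (Nat.card F - 1) ∣ (Nat.card K - 1) := by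
    rw [Module.natCard_eq_pow_finrank (K := F) (V := K)]
    simpa using Nat.sub_dvd_pow_sub_pow (Nat.card F) 1 (Module.finrank F K)
  obtain ⟨k, hk⟩ := hdvd
  rw [hk]
  have hF1 : 1 < Nat.card F := Finite.one_lt_card
  rw [Nat.mul_div_cancel_left _ (by omega)]
  rw [← Nat.card_eq_fintype_card] at *
  obtain ⟨a, ha⟩ := Nat.odd_iff.2 o1
  have hK1 : 1 < Nat.card K := Finite.one_lt_card
  have e1 : Nat.card F / 2 = a := by omega
  rw [← Nat.card_eq_fintype_card, e1]
  have e2 : Nat.card K - 1 = 2 * (k * a) := by rw [hk, ha]; simp; ring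
  omega

/-- an irreducible monic with square constant coefficient is a sum of two squares -/
lemma good_of_isSquare {F : Type*} [Field F] [Finite F] (h2 : ringChar F ≠ 2) (P : F[X])
    (hP : P.Monic) (hirr : Irreducible P) (h : IsSquare (P.eval 0)) : Good P := by
  have : Fact (Irreducible P) := ⟨hirr⟩
  set K := AdjoinRoot P
  have : Module.Finite F K := (AdjoinRoot.powerBasis' hP).finite
  have : Finite K := Module.finite_of_finite F
  set θ : K := AdjoinRoot.root P
  have hsq : IsSquare (-θ) := isSquare_of_norm h2 _ (by rw [norm_neg_root P hP]; exact h)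
  obtain ⟨κ, hκ⟩ := hsq
  set n := P.natDegree with hn
  have hfin : Module.finrank F K = n := (AdjoinRoot.powerBasis' hP).finrank
  let Φ : (degreeLT F (n / 2 + 1) × degreeLT F ((n + 1) / 2)) →ₗ[F] K :=
    ((AdjoinRoot.mkₐ P).toLinearMap ∘ₗ (degreeLT F (n / 2 + 1)).subtype).coprod
      ((LinearMap.mulLeft F κ) ∘ₗ (AdjoinRoot.mkₐ P).toLinearMap ∘ₗ (degreeLT F ((n+1) / 2)).subtype)
  have f1 : ∀ k, Module.finrank F (degreeLT F k) = k := fun k => by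
    rw [(degreeLTEquiv F k).finrank_eq]; simp
  have : ∀ k, Module.Finite F (degreeLT F k) := fun k => 
    Module.Finite.equiv (degreeLTEquiv F k).symm
  have hker : LinearMap.ker Φ ≠ ⊥ := by
    apply LinearMap.ker_ne_bot_of_finrank_lt
    rw [Module.finrank_prod, f1, f1, hfin]
    omega
  obtain ⟨⟨A, B⟩, hAB, hne⟩ := Submodule.exists_mem_ne_zero_of_ne_bot hker
  have h0 : AdjoinRoot.mk P A + κ * AdjoinRoot.mk P B = 0 := by
    simpa [Φ] using hAB
  have hdvd : P ∣ (A : F[X]) ^ 2 + X * (B : F[X]) ^ 2 := by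
    rw [← AdjoinRoot.mk_eq_zero, map_add, map_mul, map_pow, map_pow, AdjoinRoot.mk_X]
    have e : AdjoinRoot.mk P A = - (κ * AdjoinRoot.mk P B) := by linear_combination h0
    rw [e]
    linear_combination (-(AdjoinRoot.mk P (B : F[X])) ^ 2) * hκ
  obtain ⟨A, hA⟩ := A
  obtain ⟨B, hB⟩ := B
  simp only at hdvd
  have hne' : ¬ (A = 0 ∧ B = 0) := by
    rintro ⟨rfl, rfl⟩
    exact hne rfl
  have hlc : A ^ 2 + X * B ^ 2 ≠ 0 ∧ ∃ r : F, (A ^ 2 + X * B ^ 2).leadingCoeff = r ^ 2 := by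
    rcases lt_trichotomy (A ^ 2).degree (X * B ^ 2).degree with h | h | h
    · refine ⟨?_, B.leadingCoeff, ?_⟩
      · rw [← degree_ne_bot, degree_add_eq_right_of_degree_lt h]
        exact (bot_le.trans_lt h).ne'
      · rw [leadingCoeff_add_of_degree_lt h]; simp
    · exfalso
      by_cases hA0 : A = 0
      · by_cases hB0 : B = 0
        · exact hne' ⟨hA0, hB0⟩
        · rw [hA0] at h
          have : (X * B ^ 2).degree = ⊥ := by rw [← h]; simp
          rw [degree_eq_bot] at this
          simp [hB0] at this
      · have h' := natDegree_eq_of_degree_eq h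
        by_cases hB0 : B = 0
        · rw [hB0] at h
          have : (A ^ 2).degree = ⊥ := by rw [h]; simp
          rw [degree_eq_bot] at this
          simp [hA0] at this
        · rw [natDegree_pow, natDegree_mul X_ne_zero (pow_ne_zero _ hB0), natDegree_pow, natDegree_X] at h'
          omega
    · refine ⟨?_, A.leadingCoeff, ?_⟩
      · rw [← degree_ne_bot, degree_add_eq_left_of_degree_lt h]
        exact (bot_le.trans_lt h).ne'
      · rw [leadingCoeff_add_of_degree_lt' h]; simp
  obtain ⟨hS0, r, hr⟩ := hlc
  have hr0 : r ≠ 0 := by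
    rintro rfl
    rw [zero_pow two_ne_zero, leadingCoeff_eq_zero] at hr
    exact hS0 hr
  have hn1 : 0 < n := hirr.natDegree_pos
  have hdeg : (A ^ 2 + X * B ^ 2).natDegree ≤ n := by
    have hA' : A.natDegree ≤ n / 2 := by
      have := mem_degreeLT.1 hA
      rcases eq_or_ne A 0 with h0 | h0
      · simp [h0]
      rw [degree_eq_natDegree h0] at this
      have := Nat.cast_lt.1 this
      omega
    by_cases hB0 : B = 0
    · rw [hB0]
      have : (A ^ 2).natDegree ≤ 2 * (n / 2) := natDegree_pow_le_of_le _ hA'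
      simp only [ne_eq, OfNat.ofNat_ne_zero, not_false_eq_true, zero_pow, mul_zero, add_zero]
      omega
    have hB' : B.natDegree ≤ (n + 1) / 2 - 1 := by
      have := mem_degreeLT.1 hB
      rw [degree_eq_natDegree hB0] at this
      have := Nat.cast_lt.1 this
      omega
    apply natDegree_add_le_of_degree_le
    · have : (A ^ 2).natDegree ≤ 2 * (n / 2) := natDegree_pow_le_of_le _ hA'
      omega
    · have : (B ^ 2).natDegree ≤ 2 * ((n + 1) / 2 - 1) := natDegree_pow_le_of_le _ hB'
      have h3 := natDegree_mul_le_of_le (natDegree_X_le (R := F)) this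
      omega
  have hEq : A ^ 2 + X * B ^ 2 = C (r ^ 2) * P := by
    rw [← hr]
    exact eq_leadingCoeff_mul_of_monic_of_dvd_of_natDegree_le hP hdvd hdeg
  refine ⟨C r⁻¹ * A, C r⁻¹ * B, ?_⟩
  have hc : (C r⁻¹ : F[X]) ^ 2 * C (r ^ 2) = 1 := by
    rw [← C_pow, ← C_mul, ← mul_pow, inv_mul_cancel₀ hr0]; simp
  linear_combination (C r⁻¹) ^ 2 * (-hEq) - P * hc

lemma isSquare_of_good {F : Type*} [Field F] [Finite F] (f P : F[X]) (hf : Squarefree f) (hg : Good f)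
    (hP : P.Monic) (hirr : Irreducible P) (hdvd : P ∣ f) : IsSquare (P.eval 0) := by
  have : Fact (Irreducible P) := ⟨hirr⟩
  obtain ⟨A, B, hAB⟩ := hg
  have h0 : AdjoinRoot.mk P A ^ 2 + AdjoinRoot.root P * AdjoinRoot.mk P B ^ 2 = 0 := by
    have := AdjoinRoot.mk_eq_zero.2 hdvd
    rwa [hAB, map_add, map_mul, map_pow, map_pow, AdjoinRoot.mk_X] at this
  by_cases hB : AdjoinRoot.mk P B = 0
  · exfalso
    rw [hB] at h0
    have hA : AdjoinRoot.mk P A = 0 := by simpa using h0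
    obtain ⟨A', rfl⟩ := AdjoinRoot.mk_eq_zero.1 hA
    obtain ⟨B', rfl⟩ := AdjoinRoot.mk_eq_zero.1 hB
    have : P * P ∣ f := ⟨A' ^ 2 + X * B' ^ 2, by rw [hAB]; ring⟩
    exact hirr.not_isUnit (hf P this)
  · rw [← norm_neg_root P hP]
    have : -AdjoinRoot.root P = (AdjoinRoot.mk P A / AdjoinRoot.mk P B) ^ 2 := by
      field_simp
      linear_combination -h0
    rw [this, map_pow]
    exact IsSquare.sq _

lemma good_iff {F : Type*} [Field F] [Finite F] (h2 : ringChar F ≠ 2) {ι : Type*} [Fintype ι]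
    (Q : ι → F[X]) (hm : ∀ i, (Q i).Monic) (hirr : ∀ i, Irreducible (Q i))
    (hsq : Squarefree (∏ i, Q i)) : Good (∏ i, Q i) ↔ ∀ i, IsSquare ((Q i).eval 0) := by
  constructor
  · intro h i
    exact isSquare_of_good _ (Q i) hsq h (hm i) (hirr i) (Finset.dvd_prod_of_mem _ (Finset.mem_univ i))
  · intro h
    exact Good.prod _ _ fun i _ => good_of_isSquare h2 _ (hm i) (hirr i) (h i)

end LSI

namespace LSI
open Polynomial

variable {F : Type*} [Field F] [Fintype F]

lemma ringChar_ne_two (p : ℕ) [Fact p.Prime] [CharP F p] (hp : Odd p) : ringChar F ≠ 2 := by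
  rw [ringChar.eq F p]
  rintro rfl
  exact absurd hp (by decide)

open Classical in
lemma charSum_le (p m s : ℕ) [Fact p.Prime] [CharP F p] (hp : Odd p)
    (hcard : Fintype.card F = p ^ (m + s))
    (f : F[X]) (hf : Squarefree f) (hd : 0 < f.natDegree) (D : ℕ) (hD : f.natDegree ≤ D)
    (hQ : (D + 1) * (p ^ m + 1) + D + 2 ≤ p ^ s) :
    |∑ x : F, quadraticChar F (f.eval x)| ≤ 2 * (D + 2) * (p : ℤ) ^ s + D := by
  have h2 := ringChar_ne_two (F := F) p hp
  have hodd : Odd (p ^ (m + s)) := hp.pow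
  have hhalf : (p ^ (m + s) - 1) / 2 = Fintype.card F / 2 := by
    rw [hcard]; obtain ⟨k, hk⟩ := hodd; omega
  set S1 : Finset F := Finset.univ.filter fun x => quadraticChar F (f.eval x) = 1 with hS1
  set S2 : Finset F := Finset.univ.filter fun x => quadraticChar F (f.eval x) = -1 with hS2
  set S0 : Finset F := Finset.univ.filter fun x => f.eval x = 0 with hS0
  have b1 : 2 * S1.card ≤ p ^ (m + s) + 2 * (D + 2) * p ^ s := by
    apply stepanov p m s hp hcard f hf hd D hD hQ
    intro x hx
    rw [hhalf, ← quadraticChar_eq_pow_of_char_ne_two' h2, (Finset.mem_filter.1 hx).2]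
    simp
  have b2 : 2 * S2.card ≤ p ^ (m + s) + 2 * (D + 2) * p ^ s := by
    obtain ⟨c, hc⟩ := quadraticChar_exists_neg_one' h2
    have hu : IsUnit (C (c : F)) := isUnit_C.2 c.isUnit
    apply stepanov p m s hp hcard (C (c : F) * f) _ _ D _ hQ
    · intro x hx
      rw [hhalf, ← quadraticChar_eq_pow_of_char_ne_two' h2, eval_mul, eval_C, map_mul, hc, (Finset.mem_filter.1 hx).2]
      simp
    · exact (hf.squarefree_of_dvd (Associated.dvd (associated_unit_mul_left f _ hu)))
    · rw [natDegree_C_mul c.ne_zero]; exact hd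
    · rw [natDegree_C_mul c.ne_zero]; exact hD
  have b0 : S0.card ≤ D := by
    refine le_trans ?_ hD
    by_contra! hlt
    apply hf.ne_zero
    exact eq_zero_of_natDegree_lt_card_of_eval_eq_zero' f S0 (fun x hx => (Finset.mem_filter.1 hx).2) hlt
  have hsum : ∑ x : F, quadraticChar F (f.eval x) = S1.card - S2.card := by
    have : ∀ x : F, quadraticChar F (f.eval x) = (if quadraticChar F (f.eval x) = 1 then 1 else 0) - (if quadraticChar F (f.eval x) = -1 then 1 else 0) := by
      intro x
      by_cases h : f.eval x = 0
      · simp [h]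
      · rcases quadraticChar_dichotomy h with h | h <;> simp [h]
    rw [Finset.sum_congr rfl fun x _ => this x, Finset.sum_sub_distrib]
    simp [hS1, hS2]
  have htot : S1.card + S2.card + S0.card = p ^ (m + s) := by
    rw [← hcard, ← Finset.card_univ]
    rw [hS1, hS2, hS0]
    rw [Finset.card_filter, Finset.card_filter, Finset.card_filter, ← Finset.sum_add_distrib, ← Finset.sum_add_distrib, Finset.card_eq_sum_ones]
    apply Finset.sum_congr rfl
    intro x _
    by_cases h : f.eval x = 0
    · simp [h]
    · rcases quadraticChar_dichotomy h with h' | h' <;> simp [h', h]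
  rw [hsum]
  zify at *
  rw [abs_le]
  constructor <;> linarith

open Classical in
lemma equidist (p m s : ℕ) [Fact p.Prime] [CharP F p] (hp : Odd p)
    (hcard : Fintype.card F = p ^ (m + s)) {ι : Type*} [Fintype ι]
    (g : ι → F[X]) (hg : Squarefree (∏ i, g i)) (hd : ∀ i, 0 < (g i).natDegree) 
    (D : ℕ) (hD : (∏ i, g i).natDegree ≤ D)
    (hQ : (D + 1) * (p ^ m + 1) + D + 2 ≤ p ^ s) :
    |((Finset.univ.filter fun x : F => ∀ i, IsSquare ((g i).eval x)).card : ℝ) - 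
      (p : ℝ) ^ (m + s) / 2 ^ (Fintype.card ι)| ≤ 2 * (D + 2) * (p : ℝ) ^ s + 2 * D := by
  have h2 := ringChar_ne_two (F := F) p hp
  set χ : F → ℝ := fun x => (quadraticChar F x : ℝ) with hχ
  set r := Fintype.card ι with hr
  set E : ℝ := 2 * (D + 2) * (p : ℝ) ^ s + D with hE
  have hE0 : 0 ≤ E := by positivity
  set I : F → ℝ := fun x => ∏ i, (1 + χ ((g i).eval x)) with hI
  have hχle : ∀ y, |χ y| ≤ 1 := by
    intro y
    by_cases h : y = 0
    · simp [hχ, h]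
    · rcases quadraticChar_dichotomy h with h | h <;> simp only [hχ, h] <;> norm_num
  -- the smooth sum
  have hsum : |∑ x, I x - (p : ℝ) ^ (m + s)| ≤ 2 ^ r * E := by
    have e1 : ∑ x, I x = ∑ t ∈ (Finset.univ : Finset ι).powerset, ∑ x, χ ((∏ i ∈ t, g i).eval x) := by
      rw [Finset.sum_comm]
      apply Finset.sum_congr rfl
      intro x _
      rw [hI]
      simp only
      rw [Finset.prod_one_add]
      apply Finset.sum_congr rfl
      intro t _
      rw [eval_prod, hχ]
      simp only [map_prod, Int.cast_prod]
    have e2 : ∑ x : F, χ ((∏ i ∈ (∅ : Finset ι), g i).eval x) = (p : ℝ) ^ (m + s) := by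
      simp [hχ, hcard]
    rw [e1, ← Finset.add_sum_erase _ _ (Finset.empty_mem_powerset Finset.univ), e2, add_sub_cancel_left]
    apply (Finset.abs_sum_le_sum_abs _ _).trans
    apply (Finset.sum_le_card_nsmul _ _ E _).trans
    · rw [nsmul_eq_mul]
      apply mul_le_mul_of_nonneg_right _ hE0
      have : (((Finset.univ : Finset ι).powerset).erase ∅).card ≤ 2 ^ r := by
        refine (Finset.card_erase_le).trans ?_
        rw [Finset.card_powerset, Finset.card_univ]
      exact_mod_cast this
    · intro t ht
      have hne : t.Nonempty := Finset.nonempty_iff_ne_empty.2 (Finset.ne_of_mem_erase ht)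
      have hdvd : (∏ i ∈ t, g i) ∣ ∏ i, g i := Finset.prod_dvd_prod_of_subset _ _ _ (Finset.subset_univ t)
      have := charSum_le p m s hp hcard (∏ i ∈ t, g i) (hg.squarefree_of_dvd hdvd) ?_ D ?_ hQ
      · rw [hE, hχ]
        simp only
        exact_mod_cast this
      · obtain ⟨i, hi⟩ := hne
        have h1 : g i ∣ ∏ i ∈ t, g i := Finset.dvd_prod_of_mem _ hi
        exact (hd i).trans_le (natDegree_le_of_dvd h1 (hg.squarefree_of_dvd hdvd).ne_zero)
      · exact (natDegree_le_of_dvd hdvd hg.ne_zero).trans hD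
  -- comparison
  set Z : Finset F := Finset.univ.filter fun x => (∏ i, g i).eval x = 0 with hZ
  have hZc : Z.card ≤ D := by
    refine le_trans ?_ hD
    by_contra! hlt
    apply hg.ne_zero
    exact eq_zero_of_natDegree_lt_card_of_eval_eq_zero' _ Z (fun x hx => (Finset.mem_filter.1 hx).2) hlt
  have hcmp : |((Finset.univ.filter fun x : F => ∀ i, IsSquare ((g i).eval x)).card : ℝ) - (∑ x, I x) / 2 ^ r| ≤ D := by
    have e1 : ((Finset.univ.filter fun x : F => ∀ i, IsSquare ((g i).eval x)).card : ℝ) = ∑ x : F, if (∀ i, IsSquare ((g i).eval x)) then (1:ℝ) else 0 := by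
      simp
    rw [e1, Finset.sum_div, ← Finset.sum_sub_distrib]
    apply (Finset.abs_sum_le_sum_abs _ _).trans
    have : (D : ℝ) ≥ ∑ x : F, if x ∈ Z then (1:ℝ) else 0 := by
      simp only [Finset.sum_ite_mem, Finset.univ_inter, Finset.sum_const, nsmul_eq_mul, mul_one]
      exact_mod_cast hZc
    refine le_trans ?_ this
    apply Finset.sum_le_sum
    intro x _
    have hI0 : 0 ≤ I x := Finset.prod_nonneg fun i _ => by
      have := (abs_le.1 (hχle ((g i).eval x))).1; linarith
    have hI1 : I x ≤ 2 ^ r := by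
      have : I x ≤ ∏ i : ι, (2:ℝ) := Finset.prod_le_prod (fun i _ => by
        have := (abs_le.1 (hχle ((g i).eval x))).1; linarith) (fun i _ => by
        have := (abs_le.1 (hχle ((g i).eval x))).2; linarith)
      simpa using this
    have hI1' : I x / 2 ^ r ≤ 1 := by
      rw [div_le_one (by positivity)]; exact hI1
    have hI0' : 0 ≤ I x / 2 ^ r := by positivity
    by_cases hx : x ∈ Z
    · rw [if_pos hx, abs_le]
      split_ifs <;> constructor <;> linarith
    · rw [if_neg hx]
      have hx' : ∀ i, (g i).eval x ≠ 0 := by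
        intro i hi
        apply hx
        simp only [hZ, Finset.mem_filter, Finset.mem_univ, true_and, eval_prod]
        exact Finset.prod_eq_zero (Finset.mem_univ i) hi
      by_cases hall : ∀ i, IsSquare ((g i).eval x)
      · rw [if_pos hall]
        have : I x = 2 ^ r := by
          rw [hI]
          simp only
          rw [Finset.prod_congr rfl (g := fun _ => (2:ℝ))]
          · simp [hr]
          · intro i _
            have := (quadraticChar_one_iff_isSquare (hx' i)).2 (hall i)
            simp only [hχ, this]; norm_num
        rw [this, div_self (by positivity)]; simp
      · rw [if_neg hall]
        push Not at hall
        obtain ⟨i, hi⟩ := hall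
        have : I x = 0 := by
          apply Finset.prod_eq_zero (Finset.mem_univ i)
          have := quadraticChar_neg_one_iff_not_isSquare.2 hi
          simp only [hχ, this]; norm_num
        rw [this]; simp
  have h3 : |(∑ x, I x) / 2 ^ r - (p : ℝ) ^ (m + s) / 2 ^ r| ≤ E := by
    rw [← sub_div, abs_div, abs_of_pos (by positivity : (0:ℝ) < 2 ^ r), div_le_iff₀ (by positivity), mul_comm E]
    exact hsum
  have := abs_sub_le ((Finset.univ.filter fun x : F => ∀ i, IsSquare ((g i).eval x)).card : ℝ) ((∑ x, I x) / 2 ^ r) ((p : ℝ) ^ (m + s) / 2 ^ r)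
  linarith

end LSI

namespace LSI
open Polynomial

section irr
variable {F : Type*} [Field F] [Fintype F]

lemma prod_of_dvd (h : F[X]) (hm : h.Monic) (hdvd : h ∣ X ^ (Fintype.card F) - X) :
    ∃ U : Finset F, U.card = h.natDegree ∧ h = ∏ u ∈ U, (X - C u) ∧ ∀ x, x ∈ U ↔ h.eval x = 0 := by
  classical
  have hq0 := FiniteField.X_pow_card_sub_X_ne_zero F (Fintype.one_lt_card (α := F))
  have hsp : (X ^ (Fintype.card F) - X : F[X]).Splits := by
    rw [splits_iff_card_roots, FiniteField.roots_X_pow_card_sub_X, FiniteField.X_pow_card_sub_X_natDegree_eq F Fintype.one_lt_card]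
    simp
  have hs : h.Splits := Splits.of_dvd hsp hq0 hdvd
  have hnd : h.roots.Nodup := by
    refine Multiset.nodup_of_le (roots.le_of_dvd hq0 hdvd) ?_
    rw [FiniteField.roots_X_pow_card_sub_X]
    exact Finset.nodup _
  refine ⟨h.roots.toFinset, ?_, ?_, ?_⟩
  · rw [Multiset.toFinset_card_of_nodup hnd, splits_iff_card_roots.1 hs]
  · conv_lhs => rw [← prod_multiset_X_sub_C_of_monic_of_roots_card_eq hm (splits_iff_card_roots.1 hs)]
    rw [Finset.prod, Multiset.toFinset_val, Multiset.dedup_eq_self.2 hnd]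
  · intro x
    rw [Multiset.mem_toFinset, mem_roots hm.ne_zero, IsRoot]

lemma irreducible_of_factor (f : F[X]) (hm : f.Monic) (hd : 0 < f.natDegree)
    (h : ∀ P : F[X], P.Monic → Irreducible P → P ∣ f → f.natDegree ≤ P.natDegree) :
    Irreducible f := by
  obtain ⟨P, hPm, hPi, hPf⟩ := exists_monic_irreducible_factor f (not_isUnit_of_natDegree_pos _ hd)
  have : P = f := eq_of_dvd_of_natDegree_le_of_leadingCoeff hPf (h P hPm hPi hPf) (by rw [hPm.leadingCoeff, hm.leadingCoeff])
  rwa [← this]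

lemma root_pow_card (P : F[X]) (hP : P.Monic) [Fact (Irreducible P)] (y : AdjoinRoot P) :
    y ^ (Fintype.card F ^ P.natDegree) = y := by
  have : Module.Finite F (AdjoinRoot P) := (AdjoinRoot.powerBasis' hP).finite
  have : Finite (AdjoinRoot P) := Module.finite_of_finite F
  have := Fintype.ofFinite (AdjoinRoot P)
  have hfin : Module.finrank F (AdjoinRoot P) = P.natDegree := (AdjoinRoot.powerBasis' hP).finrank
  rw [← hfin, ← Module.card_eq_pow_finrank]
  exact FiniteField.pow_card y

lemma irreducible_kummer (d t : ℕ) (hdt : d * t = Fintype.card F - 1) (w : F) (hw : w ≠ 0)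
    (ho : orderOf (w ^ t) = d) : Irreducible (X ^ d - C w) := by
  have hq : 1 < Fintype.card F := Fintype.one_lt_card
  have hd0 : d ≠ 0 := by rintro rfl; omega
  apply irreducible_of_factor
  · exact monic_X_pow_sub_C _ hd0
  · rw [natDegree_X_pow_sub_C]; omega
  intro P hP hPi hdvd
  have : Fact (Irreducible P) := ⟨hPi⟩
  rw [natDegree_X_pow_sub_C]
  set θ := AdjoinRoot.root P
  set c := AdjoinRoot.of P (w ^ t) with hc
  have h1 : θ ^ d = AdjoinRoot.of P w := by
    have := AdjoinRoot.mk_eq_zero.2 hdvd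
    rw [map_sub, map_pow, AdjoinRoot.mk_X, AdjoinRoot.mk_C, sub_eq_zero] at this
    exact this
  have hθ : θ ≠ 0 := by
    intro h
    rw [h, zero_pow hd0] at h1
    exact hw ((AdjoinRoot.of P).injective (by rw [← h1, map_zero]))
  have h2 : θ ^ (Fintype.card F) = c * θ := by
    have : Fintype.card F = d * t + 1 := by omega
    rw [this, pow_succ, pow_mul, h1, hc, map_pow]
  have hcq : c ^ (Fintype.card F) = c := by
    rw [hc, ← map_pow, FiniteField.pow_card]
  have h3 : ∀ n, θ ^ (Fintype.card F ^ n) = c ^ n * θ := by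
    intro n
    induction n with
    | zero => simp
    | succ n ih =>
      rw [pow_succ, pow_mul, ih, mul_pow, h2, ← pow_mul, mul_comm n, pow_mul, hcq]; ring
  have h4 := h3 P.natDegree
  rw [root_pow_card P hP θ] at h4
  have h5 : c ^ P.natDegree = 1 := by
    apply mul_right_cancel₀ hθ; rw [← h4, one_mul]
  have h6 : (w ^ t) ^ P.natDegree = 1 := by
    apply (AdjoinRoot.of P).injective; rw [map_pow, map_one]; exact h5
  have := orderOf_dvd_of_pow_eq_one h6
  rw [ho] at this
  exact Nat.le_of_dvd hPi.natDegree_pos this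

lemma mem_of_pow_card {K : Type*} [Field K] [Algebra F K] (y : K) (hy : y ^ (Fintype.card F) = y) :
    ∃ z : F, algebraMap F K z = y := by
  have hm : (X ^ (Fintype.card F) - X : F[X]).Monic := by
    apply monic_X_pow_sub
    simpa using Fintype.one_lt_card (α := F)
  obtain ⟨U, -, hU, -⟩ := prod_of_dvd (X ^ (Fintype.card F) - X : F[X]) hm dvd_rfl
  have h1 : aeval y (X ^ (Fintype.card F) - X : F[X]) = 0 := by simp [hy]
  rw [hU, map_prod, Finset.prod_eq_zero_iff] at h1
  obtain ⟨z, -, hz⟩ := h1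
  refine ⟨z, ?_⟩
  simp only [map_sub, aeval_X, aeval_C] at hz
  exact (sub_eq_zero.1 hz).symm

lemma irreducible_AS (p k : ℕ) [hp : Fact p.Prime] [CharP F p] (hk : Fintype.card F = p ^ k) (ε w : F) (hε : ε ≠ 0) 
    (hw : ∀ z : F, z ^ p - z ≠ w) :
    Irreducible (X ^ p - C (ε ^ p * ε⁻¹) * X - C (ε ^ p * w)) ∧ 
    (X ^ p - C (ε ^ p * ε⁻¹) * X - C (ε ^ p * w)).Monic := by
  have hp1 : 1 < p := hp.out.one_lt
  have hdeg : (C (ε ^ p * ε⁻¹) * X + C (ε ^ p * w) : F[X]).degree < (p : WithBot ℕ) := by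
    refine degree_linear_le.trans_lt ?_
    exact_mod_cast hp1
  have hm : (X ^ p - C (ε ^ p * ε⁻¹) * X - C (ε ^ p * w)).Monic := by
    rw [sub_sub]
    exact monic_X_pow_sub hdeg
  have hnd : (X ^ p - C (ε ^ p * ε⁻¹) * X - C (ε ^ p * w)).natDegree = p := by
    rw [sub_sub, natDegree_sub_eq_left_of_natDegree_lt, natDegree_X_pow]
    rw [natDegree_X_pow]
    exact natDegree_linear_le.trans_lt hp1
  refine ⟨?_, hm⟩
  apply irreducible_of_factor _ hm (by omega)
  intro P hP hPi hdvd
  have : Fact (Irreducible P) := ⟨hPi⟩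
  rw [hnd]
  set e := AdjoinRoot.of P ε with he
  have he0 : e ≠ 0 := by rw [he]; simpa using hε
  set W := AdjoinRoot.of P w with hW
  set y := AdjoinRoot.root P / e with hy
  have hch : CharP (AdjoinRoot P) p := charP_of_injective_ringHom (AdjoinRoot.of P).injective p
  have h1 : y ^ p = y + W := by
    have := AdjoinRoot.mk_eq_zero.2 hdvd
    simp only [map_sub, map_mul, map_pow, AdjoinRoot.mk_X, AdjoinRoot.mk_C] at this
    rw [map_inv₀, ← he, ← hW] at this
    rw [hy, div_pow]
    field_simp
    field_simp at this
    linear_combination this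
  set b := y ^ (Fintype.card F) - y with hb
  have hbp : b ^ p = b := by
    have hWq : W ^ (Fintype.card F) = W := by rw [hW, ← map_pow, FiniteField.pow_card]
    have : (y ^ (Fintype.card F)) ^ p = y ^ (Fintype.card F) + W := by
      rw [← pow_mul, mul_comm, pow_mul, h1]
      conv_rhs => rw [← hWq]
      rw [hk, add_pow_char_pow]
    rw [hb, sub_pow_char, this, h1]; ring
  have hbq : b ^ (Fintype.card F) = b := by
    rw [hk]
    clear_value b
    clear hk hb
    induction k with
    | zero => simp
    | succ n ih => rw [pow_succ, pow_mul, ih, hbp]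
  have h3 : ∀ n : ℕ, y ^ (Fintype.card F ^ n) = y + n * b := by
    intro n
    induction n with
    | zero => simp
    | succ n ih =>
      have hyq : y ^ (Fintype.card F) = y + b := by rw [hb]; ring
      have hnq : ((n : AdjoinRoot P)) ^ (Fintype.card F) = n := by
        rw [← map_natCast (AdjoinRoot.of P) n, ← map_pow, FiniteField.pow_card]
      have hadd : (y + n * b) ^ (Fintype.card F) = y ^ (Fintype.card F) + (n * b) ^ (Fintype.card F) := by
        rw [hk, add_pow_char_pow]
      rw [pow_succ, pow_mul, ih, hadd, mul_pow, hnq, hbq, hyq]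
      push_cast; ring
  have h4 := h3 P.natDegree
  rw [root_pow_card P hP y] at h4
  have h5 : (P.natDegree : AdjoinRoot P) * b = 0 := by linear_combination -h4
  rcases mul_eq_zero.1 h5 with h6 | h6
  · rw [CharP.cast_eq_zero_iff _ p] at h6
    exact Nat.le_of_dvd hPi.natDegree_pos h6
  · exfalso
    have hyq : y ^ (Fintype.card F) = y := by linear_combination -hb + h6
    obtain ⟨z, hz⟩ := mem_of_pow_card y hyq
    apply hw z
    apply (AdjoinRoot.of P).injective
    rw [← hW, map_sub, map_pow]
    have : AdjoinRoot.of P z = y := hz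
    rw [this, h1]; ring

end irr

end LSI

namespace LSI
open Polynomial

section shift
set_option linter.unusedSectionVars false
variable {F : Type*} [Field F] [Fintype F]

noncomputable def fp (p : ℕ) (a c : F) : F[X] := X ^ (p ^ 2) + C a * X + C c

lemma comp_fp (p : ℕ) [Fact p.Prime] [CharP F p] (a κ x : F) :
    (X ^ (p ^ 2) + C a * X - C κ : F[X]).comp (X + C x) = fp p a (x ^ (p ^ 2) + a * x - κ) := by
  simp only [fp, sub_comp, add_comp, pow_comp, X_comp, mul_comp, C_comp, add_pow_char_pow, C_sub, C_add, C_mul, C_pow]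
  ring

lemma separable_fp (p : ℕ) [Fact p.Prime] [CharP F p] (a κ : F) (ha : a ≠ 0) :
    (X ^ (p ^ 2) + C a * X - C κ : F[X]).Separable := by
  have hd : derivative (X ^ (p ^ 2) + C a * X - C κ : F[X]) = C a := by
    simp [derivative_X_pow]
  rw [Separable, hd]
  exact ⟨0, C a⁻¹, by rw [zero_mul, zero_add, ← C_mul, inv_mul_cancel₀ ha, C_1]⟩

lemma irreducible_comp (Q : F[X]) (x : F) (h : Irreducible Q) : Irreducible (Q.comp (X + C x)) := by
  have := (MulEquiv.irreducible_iff (taylorEquiv x)).2 h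
  simpa [taylorEquiv, taylor_apply] using this

lemma natDegree_fp (p : ℕ) (hp : 1 < p) (a κ : F) : (X ^ (p ^ 2) + C a * X - C κ : F[X]).natDegree = p ^ 2 := by
  have h1 : 1 < p ^ 2 := Nat.one_lt_pow two_ne_zero hp
  rw [natDegree_sub_C, natDegree_add_eq_left_of_natDegree_lt, natDegree_X_pow]
  rw [natDegree_X_pow]
  exact (natDegree_C_mul_le a X).trans_lt (by rwa [natDegree_X])

open Classical in
lemma shift_count (p m s : ℕ) [hpf : Fact p.Prime] [CharP F p] (hp : Odd p)
    (hcard : Fintype.card F = p ^ (m + s)) (hQ : (p ^ 2 + 1) * (p ^ m + 1) + p ^ 2 + 2 ≤ p ^ s)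
    (a κ : F) (ha : a ≠ 0) {ι : Type*} [Fintype ι] (Q : ι → F[X]) (hm : ∀ i, (Q i).Monic)
    (hirr : ∀ i, Irreducible (Q i)) (hprod : ∏ i, Q i = X ^ (p ^ 2) + C a * X - C κ) :
    |((Finset.univ.filter fun x : F => Good (fp p a (x ^ (p ^ 2) + a * x - κ))).card : ℝ)
      - (p : ℝ) ^ (m + s) / 2 ^ (Fintype.card ι)| ≤ 2 * ((p : ℝ) ^ 2 + 2) * (p : ℝ) ^ s + 2 * (p : ℝ) ^ 2 := by
  have key := equidist p m s hp hcard Q (by rw [hprod]; exact (separable_fp p a κ ha).squarefree)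
    (fun i => (hirr i).natDegree_pos) (p ^ 2) (by rw [hprod, natDegree_fp p hpf.out.one_lt]) hQ
  have : (Finset.univ.filter fun x : F => Good (fp p a (x ^ (p ^ 2) + a * x - κ))) =
      Finset.univ.filter fun x : F => ∀ i, IsSquare ((Q i).eval x) := by
    ext x
    simp only [Finset.mem_filter, Finset.mem_univ, true_and]
    have hfx : fp p a (x ^ (p ^ 2) + a * x - κ) = ∏ i, (Q i).comp (X + C x) := by
      rw [← comp_fp, ← hprod, prod_comp]
    rw [hfx, good_iff (ringChar_ne_two p hp)]
    · simp
    · intro i; exact (hm i).comp_X_add_C x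
    · intro i; exact irreducible_comp _ _ (hirr i)
    · rw [← hfx]
      have := separable_fp p a (-(x ^ (p ^ 2) + a * x - κ)) ha
      rw [C_neg, sub_neg_eq_add] at this
      exact this.squarefree
  rw [this]
  push_cast at key
  exact key

end shift
end LSI

namespace LSI
open Polynomial

section kummer
set_option linter.unusedSectionVars false
variable {F : Type*} [Field F] [Fintype F]

lemma kummer_prod (p k d e : ℕ) (hp : 1 < p) (hk : k * (p ^ 2 - 1) = Fintype.card F - 1) (hde : d * e = p ^ 2 - 1)
    (a : F) (ha : a ≠ 0) (ho : orderOf ((-a) ^ k) = d) :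
    ∃ S : Finset F, S.card = e ∧ (∀ w ∈ S, Irreducible (X ^ d - C w)) ∧ (∀ w ∈ S, w ^ e = -a) ∧
      X * ∏ w ∈ S, (X ^ d - C w) = X ^ (p ^ 2) + C a * X := by
  have hp2 : 1 < p ^ 2 := Nat.one_lt_pow two_ne_zero hp
  have he0 : e ≠ 0 := by rintro rfl; omega
  have hd0 : d ≠ 0 := by rintro rfl; omega
  have hq : 1 < Fintype.card F := Fintype.one_lt_card
  have hN : Fintype.card F = e * (k * d) + 1 := by
    have : e * (k * d) = k * (d * e) := by ring
    rw [this, hde]; omega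
  have hdvd : (X ^ e - C (-a) : F[X]) ∣ X ^ (Fintype.card F) - X := by
    have h1 := sub_dvd_pow_sub_pow (X ^ e : F[X]) (C (-a)) (k * d)
    rw [← pow_mul, ← C_pow, pow_mul (-a), ← ho, pow_orderOf_eq_one, C_1, ho] at h1
    refine h1.trans ⟨X, ?_⟩
    rw [hN, pow_succ]; ring
  obtain ⟨S, hS1, hS2, hS3⟩ := prod_of_dvd _ (monic_X_pow_sub_C (-a) he0) hdvd
  rw [natDegree_X_pow_sub_C] at hS1
  have hpow : ∀ w ∈ S, w ^ e = -a := by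
    intro w hw
    have := (hS3 w).1 hw
    simp only [eval_sub, eval_pow, eval_X, eval_C] at this
    exact sub_eq_zero.1 this
  refine ⟨S, hS1, ?_, hpow, ?_⟩
  · intro w hw
    apply irreducible_kummer d (e * k)
    · rw [hN]; simp; ring
    · rintro rfl
      have := hpow 0 hw
      rw [zero_pow he0] at this
      exact ha (by simpa using this.symm)
    · rw [pow_mul, hpow w hw, ho]
  · have h2 := congrArg (fun f : F[X] => f.comp (X ^ d)) hS2
    simp only [sub_comp, pow_comp, X_comp, C_comp, prod_comp] at h2
    rw [← h2, ← pow_mul, hde, C_neg]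
    have : (X : F[X]) ^ (p ^ 2) = X * X ^ (p ^ 2 - 1) := by
      rw [← pow_succ']; congr 1; omega
    rw [this]; ring

open Classical in
lemma kummer_count (p m s k d e : ℕ) [hpf : Fact p.Prime] [CharP F p] (hp : Odd p)
    (hcard : Fintype.card F = p ^ (m + s)) (hQ : (p ^ 2 + 1) * (p ^ m + 1) + p ^ 2 + 2 ≤ p ^ s)
    (hk : k * (p ^ 2 - 1) = Fintype.card F - 1) (hde : d * e = p ^ 2 - 1)
    (a : F) (ha : a ≠ 0) (ho : orderOf ((-a) ^ k) = d) :
    |((Finset.univ.filter fun x : F => Good (fp p a (x ^ (p ^ 2) + a * x))).card : ℝ)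
      - (p : ℝ) ^ (m + s) / 2 ^ (e + 1)| ≤ 2 * ((p : ℝ) ^ 2 + 2) * (p : ℝ) ^ s + 2 * (p : ℝ) ^ 2 := by
  obtain ⟨S, hS, hirr, -, hprod⟩ := kummer_prod p k d e hpf.out.one_lt hk hde a ha ho
  have hd0 : d ≠ 0 := by
    rintro rfl
    have := Nat.one_lt_pow two_ne_zero hpf.out.one_lt
    omega
  have := shift_count p m s hp hcard hQ a 0 ha (ι := Option S)
    (fun o => o.elim X (fun w => X ^ d - C (w : F)))
    (by rintro (_ | w)
        · exact monic_X
        · exact monic_X_pow_sub_C _ hd0)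
    (by rintro (_ | w)
        · exact irreducible_X
        · exact hirr w w.2)
    (by rw [Fintype.prod_option]
        simp only [Option.elim]
        rw [Finset.prod_coe_sort S (fun w => X ^ d - C w), hprod]; simp)
  simpa [hS] using this

open Classical in
lemma count_inj (p m s k d e : ℕ) [hpf : Fact p.Prime] [CharP F p] (hp : Odd p)
    (hcard : Fintype.card F = p ^ (m + s)) (hQ : (p ^ 2 + 1) * (p ^ m + 1) + p ^ 2 + 2 ≤ p ^ s)
    (hk : k * (p ^ 2 - 1) = Fintype.card F - 1) (hde : d * e = p ^ 2 - 1)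
    (a : F) (ha : a ≠ 0) (ho : orderOf ((-a) ^ k) = d) (hd : d ≠ 1) :
    |((Finset.univ.filter fun c : F => Good (fp p a c)).card : ℝ)
      - (p : ℝ) ^ (m + s) / 2 ^ (e + 1)| ≤ 2 * ((p : ℝ) ^ 2 + 2) * (p : ℝ) ^ s + 2 * (p : ℝ) ^ 2 := by
  have hp2 := Nat.one_lt_pow two_ne_zero hpf.out.one_lt
  have hinj : Function.Injective (fun x : F => x ^ (p ^ 2) + a * x) := by
    intro x y hxy
    by_contra hne
    have hz : x - y ≠ 0 := sub_ne_zero.2 hne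
    simp only at hxy
    have h1 : (x - y) ^ (p ^ 2) + a * (x - y) = 0 := by
      rw [sub_pow_char_pow]; linear_combination hxy
    have h2 : (x - y) ^ (p ^ 2 - 1) = -a := by
      apply mul_right_cancel₀ hz
      rw [← pow_succ, show p ^ 2 - 1 + 1 = p ^ 2 by omega]; linear_combination h1
    apply hd
    rw [← ho, ← h2, ← pow_mul, mul_comm, hk, FiniteField.pow_card_sub_one_eq_one _ hz, orderOf_one]
  have hbij := Finite.injective_iff_bijective.1 hinj
  have := kummer_count p m s k d e hp hcard hQ hk hde a ha ho
  rwa [Finset.card_bijective (t := Finset.univ.filter fun c : F => Good (fp p a c)) _ hbij (by simp)] at this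
end kummer
end LSI

namespace LSI
open Polynomial

section AS
set_option linter.unusedSectionVars false
variable {F : Type*} [Field F] [Fintype F]

open Classical in
lemma card_roots_le (f : F[X]) (hf : f ≠ 0) : (Finset.univ.filter fun x : F => f.eval x = 0).card ≤ f.natDegree := by
  refine le_trans ?_ (le_trans (Multiset.toFinset_card_le _) (card_roots' f))
  apply Finset.card_le_card
  intro x hx
  simp only [Finset.mem_filter, Finset.mem_univ, true_and] at hx
  rw [Multiset.mem_toFinset, mem_roots hf]; exact hx

lemma monic_lin (n : ℕ) (hn : 1 < n) (a b : F) : (X ^ n + (C a * X + C b) : F[X]).Monic :=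
  monic_X_pow_add (degree_linear_le.trans_lt (by exact_mod_cast hn))

lemma natDegree_lin (n : ℕ) (hn : 1 < n) (a b : F) : (X ^ n + (C a * X + C b) : F[X]).natDegree = n := by
  rw [natDegree_add_eq_left_of_natDegree_lt, natDegree_X_pow]
  rw [natDegree_X_pow]
  exact natDegree_linear_le.trans_lt hn

open Classical in
lemma card_lin_le (n : ℕ) (hn : 1 < n) (a b : F) : (Finset.univ.filter fun x : F => x ^ n + a * x = b).card ≤ n := by
  have := card_roots_le _ (monic_lin n hn a (-b)).ne_zero
  rw [natDegree_lin n hn] at this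
  refine le_trans (le_of_eq ?_) this
  congr 1
  ext x
  simp only [Finset.mem_filter, Finset.mem_univ, true_and, eval_add, eval_pow, eval_X, eval_mul, eval_C]
  rw [← sub_eq_zero, sub_eq_add_neg, add_assoc]

lemma X_dvd (p k : ℕ) (hp : 1 < p) (hk : k * (p ^ 2 - 1) = Fintype.card F - 1) :
    (X ^ (p ^ 2) - X : F[X]) ∣ X ^ (Fintype.card F) - X := by
  have hp2 : 1 < p ^ 2 := Nat.one_lt_pow two_ne_zero hp
  have hq : 1 < Fintype.card F := Fintype.one_lt_card
  have h1 := sub_dvd_pow_sub_pow (X ^ (p ^ 2 - 1) : F[X]) 1 k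
  rw [← pow_mul, mul_comm, hk, one_pow] at h1
  have h2 : ∀ n : ℕ, 1 < n → (X ^ n - X : F[X]) = X * (X ^ (n - 1) - 1) := by
    intro n hn
    rw [mul_sub, ← pow_succ', mul_one, show n - 1 + 1 = n by omega]
  rw [h2 _ hp2, h2 _ hq]
  exact mul_dvd_mul_left X h1

lemma exists_V (p k : ℕ) (hp : 1 < p) (hk : k * (p ^ 2 - 1) = Fintype.card F - 1) :
    ∃ V : Finset F, V.card = p ^ 2 ∧ ∀ v, v ∈ V ↔ v ^ (p ^ 2) = v := by
  have hp2 : 1 < p ^ 2 := Nat.one_lt_pow two_ne_zero hp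
  have e : (X ^ (p ^ 2) + (C (-1) * X + C 0) : F[X]) = X ^ (p ^ 2) - X := by simp; ring
  have hm := monic_lin (p ^ 2) hp2 (-1 : F) 0
  have hn := natDegree_lin (p ^ 2) hp2 (-1 : F) 0
  rw [e] at hm hn
  obtain ⟨V, h1, -, h3⟩ := prod_of_dvd _ hm (X_dvd p k hp hk)
  refine ⟨V, h1.trans hn, fun v => ?_⟩
  rw [h3]; simp [sub_eq_zero]

lemma exists_U (p k : ℕ) [hpf : Fact p.Prime] [CharP F p] (hk : k * (p ^ 2 - 1) = Fintype.card F - 1) :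
    ∃ U : Finset F, U.card = p ∧ (∀ u ∈ U, u ^ p = - u) ∧ X ^ p + X = ∏ u ∈ U, (X - C u) := by
  have hp := hpf.out.one_lt
  have e : (X ^ p + (C 1 * X + C 0) : F[X]) = X ^ p + X := by simp
  have hm := monic_lin p hp (1 : F) 0
  have hn := natDegree_lin p hp (1 : F) 0
  rw [e] at hm hn
  have hd : (X ^ p + X : F[X]) ∣ X ^ (p ^ 2) - X := by
    have : (X ^ (p ^ 2) - X : F[X]) = (X ^ p + X) ^ p - (X ^ p + X) := by
      rw [add_pow_char, ← pow_mul, sq]; ring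
    rw [this]
    exact dvd_sub (dvd_pow_self _ (by omega)) dvd_rfl
  obtain ⟨V, h1, h2, h3⟩ := prod_of_dvd _ hm (hd.trans (X_dvd p k hp hk))
  refine ⟨V, h1.trans hn, fun v hv => ?_, h2⟩
  have := (h3 v).1 hv
  simp at this
  linear_combination this

open Classical in
lemma exists_delta (p k : ℕ) [hpf : Fact p.Prime] [CharP F p] (hk : k * (p ^ 2 - 1) = Fintype.card F - 1) :
    ∃ δ : F, ∀ z : F, z ^ (p ^ 2) - z ≠ δ ^ p + δ := by
  have hp := hpf.out.one_lt
  by_contra hcon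
  push Not at hcon
  choose z hz using hcon
  obtain ⟨V, hV1, hV2⟩ := exists_V p k hp hk
  have h := Finset.card_le_mul_card_image (f := fun y : F × F => z y.1 + y.2) (Finset.univ ×ˢ V) p (by
    intro b _
    refine le_trans ?_ (card_lin_le p hp 1 (b ^ (p ^ 2) - b))
    apply Finset.card_le_card_of_injOn (fun y => y.1)
    · rintro ⟨x, v⟩ hy
      simp only [Finset.coe_filter, Finset.mem_product, Finset.mem_univ, true_and, Set.mem_ofPred_eq] at hy ⊢
      obtain ⟨hv, rfl⟩ := hy
      rw [add_pow_char_pow, (hV2 v).1 hv]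
      linear_combination -hz x
    · rintro ⟨x, v⟩ hy ⟨x', v'⟩ hy' hxx
      simp only [Finset.coe_filter, Finset.mem_product, Finset.mem_univ, true_and, Set.mem_ofPred_eq] at hy hy' hxx
      subst hxx
      have : v = v' := by linear_combination hy.2 - hy'.2
      rw [this])
  rw [Finset.card_product, hV1, Finset.card_univ] at h
  have h2 : (Finset.image (fun y : F × F => z y.1 + y.2) (Finset.univ ×ˢ V)).card ≤ Fintype.card F := Finset.card_le_univ _
  have h3 := h.trans (Nat.mul_le_mul_left p h2)
  have h4 : 0 < Fintype.card F := Fintype.card_pos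
  rw [mul_comm] at h3
  have := Nat.le_of_mul_le_mul_right h3 h4
  nlinarith

open Classical in
lemma as_count (p m s k : ℕ) [hpf : Fact p.Prime] [CharP F p] (hp : Odd p)
    (hcard : Fintype.card F = p ^ (m + s)) (hQ : (p ^ 2 + 1) * (p ^ m + 1) + p ^ 2 + 2 ≤ p ^ s)
    (hk : k * (p ^ 2 - 1) = Fintype.card F - 1) (ε δ a κ : F) (hε : ε ≠ 0)
    (hδ : ∀ z : F, z ^ (p ^ 2) - z ≠ δ ^ p + δ)
    (ha : a = - (ε ^ (p ^ 2) * ε⁻¹)) (hκ : κ = ε ^ (p ^ 2) * (δ ^ p + δ)) :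
    |((Finset.univ.filter fun x : F => Good (fp p a (x ^ (p ^ 2) + a * x - κ))).card : ℝ)
      - (p : ℝ) ^ (m + s) / 2 ^ p| ≤ 2 * ((p : ℝ) ^ 2 + 2) * (p : ℝ) ^ s + 2 * (p : ℝ) ^ 2 := by
  obtain ⟨U, hU1, hU2, hU3⟩ := exists_U (F := F) p k hk
  have hirr : ∀ u ∈ U, _ := fun u hu => irreducible_AS p (m + s) hcard ε (δ + u) hε (by
    intro z hz
    apply hδ z
    have h1 : (z ^ p - z) ^ p = z ^ (p ^ 2) - z ^ p := by rw [sub_pow_char, ← pow_mul, sq]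
    have h2 : (δ + u) ^ p = δ ^ p - u := by rw [add_pow_char, hU2 u hu]; ring
    rw [hz, h2] at h1
    linear_combination -h1 + hz)
  have ha0 : a ≠ 0 := by rw [ha]; simp [hε]
  have := shift_count p m s hp hcard hQ a κ ha0 (ι := U)
    (fun u => X ^ p - C (ε ^ p * ε⁻¹) * X - C (ε ^ p * (δ + u)))
    (fun u => (hirr u u.2).2) (fun u => (hirr u u.2).1)
    (by
      rw [Finset.prod_coe_sort U (fun u => X ^ p - C (ε ^ p * ε⁻¹) * X - C (ε ^ p * (δ + u)))]
      set Z : F[X] := C ε⁻¹ * X with hZ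
      have hZX : C ε * Z = X := by
        rw [hZ, ← mul_assoc, ← C_mul, mul_inv_cancel₀ hε, C_1, one_mul]
      have hf : ∀ u ∈ U, (X ^ p - C (ε ^ p * ε⁻¹) * X - C (ε ^ p * (δ + u)) : F[X]) = C (ε ^ p) * ((X - C u).comp (Z ^ p - Z - C δ)) := by
        intro u _
        simp only [sub_comp, X_comp, C_comp]
        conv_lhs => rw [← hZX]
        have h5 : C ε⁻¹ * C ε = (1 : F[X]) := by rw [← C_mul, inv_mul_cancel₀ hε, C_1]
        simp only [C_mul, C_add, C_pow, mul_pow]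
        linear_combination (-C ε ^ p * Z) * h5
      rw [Finset.prod_congr rfl hf, Finset.prod_mul_distrib, Finset.prod_const, hU1, ← prod_comp, ← hU3]
      simp only [add_comp, pow_comp, X_comp]
      have h6 : (Z ^ p - Z - C δ) ^ p = Z ^ (p ^ 2) - Z ^ p - C (δ ^ p) := by
        rw [sub_pow_char, sub_pow_char, ← pow_mul, sq, C_pow]
      rw [h6, ha, hκ]
      conv_rhs => rw [← hZX]
      have h5 : C ε⁻¹ * C ε = (1 : F[X]) := by rw [← C_mul, inv_mul_cancel₀ hε, C_1]
      have h7 : (C (ε ^ p) : F[X]) ^ p = C ε ^ (p ^ 2) := by rw [C_pow, ← pow_mul, sq]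
      rw [h7]
      simp only [C_mul, C_add, C_neg, C_pow, mul_pow]
      linear_combination (C ε ^ (p ^ 2) * Z) * h5)
  simpa [hU1] using this

open Classical in
lemma count_one (p m s k : ℕ) [hpf : Fact p.Prime] [CharP F p] (hp : Odd p)
    (hcard : Fintype.card F = p ^ (m + s)) (hQ : (p ^ 2 + 1) * (p ^ m + 1) + p ^ 2 + 2 ≤ p ^ s)
    (hk : k * (p ^ 2 - 1) = Fintype.card F - 1)
    (a : F) (ha : a ≠ 0) (ho : orderOf ((-a) ^ k) = 1) :
    |((Finset.univ.filter fun c : F => Good (fp p a c)).card : ℝ)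
      - (p : ℝ) ^ (m + s) * ((1 / (p : ℝ) ^ 2) * (1 / 2 ^ (p ^ 2) + ((p : ℝ) ^ 2 - 1) / 2 ^ p))|
      ≤ 2 * ((p : ℝ) ^ 2 + 2) * (p : ℝ) ^ s + 2 * (p : ℝ) ^ 2 := by
  have hp1 := hpf.out.one_lt
  have hp2 := Nat.one_lt_pow two_ne_zero hpf.out.one_lt
  obtain ⟨S, hS1, -, hS3, -⟩ := kummer_prod p k 1 (p ^ 2 - 1) hp1 hk (one_mul _) a ha ho
  obtain ⟨γ, hγS⟩ : S.Nonempty := by rw [← Finset.card_pos, hS1]; omega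
  have hγ := hS3 γ hγS
  have hγ0 : γ ≠ 0 := by
    rintro rfl
    rw [zero_pow (by omega)] at hγ
    exact ha (by simpa using hγ.symm)
  have hγa : γ ^ (p ^ 2) = -a * γ := by
    rw [← hγ, ← pow_succ]; congr 1; omega
  obtain ⟨δ, hδ⟩ := exists_delta (F := F) p k hk
  obtain ⟨V, hV1, hV2⟩ := exists_V (F := F) p k hp1 hk
  set τ := γ ^ (p ^ 2) * (δ ^ p + δ) with hτ
  have hτL : ∀ y : F, y ^ (p ^ 2) + a * y ≠ τ := by
    intro y hy
    apply hδ (y / γ)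
    rw [div_pow]
    have hg0 : γ ^ (p ^ 2) ≠ 0 := pow_ne_zero _ hγ0
    have : a = -γ ^ (p ^ 2) / γ := by rw [hγa]; field_simp
    rw [this, hτ] at hy
    apply mul_left_cancel₀ hg0
    rw [← hy]; field_simp; ring
  let H : F × F → F := fun y => y.2 ^ (p ^ 2) + a * y.2 - y.1 * τ
  have hfib : ∀ c ∈ (Finset.univ : Finset F), ((V ×ˢ (Finset.univ : Finset F)).filter fun y => H y = c).card ≤ p ^ 2 := by
    intro c _
    rcases Finset.eq_empty_or_nonempty ((V ×ˢ (Finset.univ : Finset F)).filter fun y => H y = c) with h0 | ⟨⟨v, x⟩, hvx⟩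
    · rw [h0]; simp
    · refine le_trans ?_ (card_lin_le (p ^ 2) hp2 a (c + v * τ))
      simp only [Finset.mem_filter, Finset.mem_product, Finset.mem_univ, and_true] at hvx
      have hall : ∀ y ∈ ((V ×ˢ (Finset.univ : Finset F)).filter fun y => H y = c), y.1 = v := by
        rintro ⟨v', x'⟩ hy
        simp only [Finset.mem_filter, Finset.mem_product, Finset.mem_univ, and_true] at hy
        simp only
        by_contra hne
        have hw : v' - v ≠ 0 := sub_ne_zero.2 hne
        have hwV : (v' - v) ^ (p ^ 2) = v' - v := by
          rw [sub_pow_char_pow, (hV2 _).1 hy.1, (hV2 _).1 hvx.1]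
        apply hτL ((x' - x) / (v' - v))
        rw [div_pow, hwV, sub_pow_char_pow]
        have e1 := hy.2
        have e2 := hvx.2
        simp only [H] at e1 e2
        field_simp
        linear_combination e1 - e2
      apply Finset.card_le_card_of_injOn (fun y => y.2)
      · intro y hy
        have hv := hall y (by simpa using hy)
        simp only [Finset.coe_filter, Finset.mem_product, Finset.mem_univ, and_true, true_and, Set.mem_ofPred_eq] at hy ⊢
        rw [← hy.2, ← hv]; simp only [H]; ring
      · intro y hy y' hy' hyy
        have hv := hall y (by simpa using hy)
        have hv' := hall y' (by simpa using hy')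
        exact Prod.ext (hv.trans hv'.symm) hyy
  have hsum : ∑ c : F, ((V ×ˢ (Finset.univ : Finset F)).filter fun y => H y = c).card = ∑ c : F, p ^ 2 := by
    rw [← Finset.card_eq_sum_card_fiberwise (f := H) (s := V ×ˢ (Finset.univ : Finset F)) (t := Finset.univ) (fun _ _ => by simp), Finset.card_product, hV1]
    simp [mul_comm]
  have hfib' := (Finset.sum_eq_sum_iff_of_le hfib).1 hsum
  set G := Finset.univ.filter fun c : F => Good (fp p a c) with hG
  have h1 : p ^ 2 * G.card = ((V ×ˢ (Finset.univ : Finset F)).filter fun y => H y ∈ G).card := by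
    rw [Finset.card_eq_sum_card_fiberwise (f := H) (t := G) (fun y hy => by simpa using (Finset.mem_filter.1 hy).2)]
    rw [mul_comm, ← smul_eq_mul, ← Finset.sum_const]
    apply Finset.sum_congr rfl
    intro c hc
    rw [← hfib' c (Finset.mem_univ _), Finset.filter_filter]
    congr 1
    ext y
    simp only [Finset.mem_filter]
    constructor
    · rintro ⟨h, rfl⟩; exact ⟨h, hc, rfl⟩
    · rintro ⟨h, _, h'⟩; exact ⟨h, h'⟩
  have h2 : ((V ×ˢ (Finset.univ : Finset F)).filter fun y => H y ∈ G).card =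
      ∑ v ∈ V, (Finset.univ.filter fun x : F => Good (fp p a (x ^ (p ^ 2) + a * x - v * τ))).card := by
    rw [Finset.card_filter, Finset.sum_product]
    apply Finset.sum_congr rfl
    intro v _
    rw [Finset.card_filter]
    apply Finset.sum_congr rfl
    intro x _
    simp [hG, H]
  rw [h2] at h1
  have h0V : (0 : F) ∈ V := by rw [hV2]; exact zero_pow (by omega)
  set E := 2 * ((p : ℝ) ^ 2 + 2) * (p : ℝ) ^ s + 2 * (p : ℝ) ^ 2 with hE
  set q : ℝ := (p : ℝ) ^ (m + s) with hq
  set n : F → ℝ := fun v => ((Finset.univ.filter fun x : F => Good (fp p a (x ^ (p ^ 2) + a * x - v * τ))).card : ℝ) with hn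
  have hb0 : |n 0 - q / 2 ^ (p ^ 2)| ≤ E := by
    have := kummer_count p m s k 1 (p ^ 2 - 1) hp hcard hQ hk (one_mul _) a ha ho
    rw [show p ^ 2 - 1 + 1 = p ^ 2 by omega] at this
    simpa [hn] using this
  have hbv : ∀ v ∈ V.erase 0, |n v - q / 2 ^ p| ≤ E := by
    intro v hv
    obtain ⟨hv0, hv⟩ := Finset.mem_erase.1 hv
    have hvV := (hV2 v).1 hv
    apply as_count p m s k hp hcard hQ hk (γ * v) δ a (v * τ) (mul_ne_zero hγ0 hv0) hδ
    · rw [mul_pow, hvV, hγa]; field_simp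
    · rw [mul_pow, hvV, hτ]; ring
  have h3 : (p : ℝ) ^ 2 * G.card = n 0 + ∑ v ∈ V.erase 0, n v := by
    rw [Finset.add_sum_erase V n h0V]
    simp only [hn]
    rw [← Nat.cast_sum, ← h1]; push_cast; ring
  have hcardV : ((V.erase 0).card : ℝ) = (p : ℝ) ^ 2 - 1 := by
    rw [Finset.card_erase_of_mem h0V, hV1, Nat.cast_sub hp2.le]; simp
  have h4 : |∑ v ∈ V.erase 0, n v - ((p : ℝ) ^ 2 - 1) * (q / 2 ^ p)| ≤ ((p : ℝ) ^ 2 - 1) * E := by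
    rw [← hcardV, ← nsmul_eq_mul, ← nsmul_eq_mul, ← Finset.sum_const, ← Finset.sum_sub_distrib]
    refine (Finset.abs_sum_le_sum_abs _ _).trans ?_
    rw [← Finset.sum_const]
    exact Finset.sum_le_sum hbv
  have hP : (0 : ℝ) < (p : ℝ) ^ 2 := by positivity
  have h5 : (G.card : ℝ) - q * ((1 / (p : ℝ) ^ 2) * (1 / 2 ^ (p ^ 2) + ((p : ℝ) ^ 2 - 1) / 2 ^ p)) =
      ((n 0 - q / 2 ^ (p ^ 2)) + (∑ v ∈ V.erase 0, n v - ((p : ℝ) ^ 2 - 1) * (q / 2 ^ p))) / (p : ℝ) ^ 2 := by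
    rw [eq_div_iff hP.ne']
    have : (G.card : ℝ) * (p : ℝ) ^ 2 = n 0 + ∑ v ∈ V.erase 0, n v := by rw [← h3]; ring
    rw [sub_mul, this]
    field_simp
    ring
  rw [h5, abs_div, abs_of_pos hP, div_le_iff₀ hP]
  refine (abs_add_le _ _).trans ?_
  linarith

end AS
end LSI

namespace LSI
open Polynomial

noncomputable def mm (p d : ℕ) : ℝ :=
  if d = 1 then (1 / (p : ℝ) ^ 2) * (1 / 2 ^ (p ^ 2) + ((p : ℝ) ^ 2 - 1) / 2 ^ p) else 1 / 2 ^ ((p ^ 2 - 1) / d + 1)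

lemma const_eq (p : ℕ) (hp : 1 < p) : ((p : ℝ) ^ 2 - 1) * landauShortIntervalConstant p =
    ∑ d ∈ (p ^ 2 - 1).divisors, (Nat.totient d : ℝ) * mm p d := by
  have hp2 := Nat.one_lt_pow two_ne_zero hp
  have hP2 : (1 : ℝ) < (p : ℝ) ^ 2 := by exact_mod_cast hp2
  have hP0 : (p : ℝ) ^ 2 - 1 ≠ 0 := by linarith
  have hP1 : (p : ℝ) ≠ 0 := by
    have : p ≠ 0 := by omega
    exact_mod_cast this
  rw [← Finset.add_sum_erase _ _ (Nat.one_mem_divisors.2 (show p ^ 2 - 1 ≠ 0 by omega))]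
  have : ∑ d ∈ (p ^ 2 - 1).divisors.erase 1, (Nat.totient d : ℝ) * mm p d =
     (1 / 2 ^ (p ^ 2)) * ∑ d ∈ (p ^ 2 - 1).divisors.erase 1,
      (2 : ℝ) ^ ((p ^ 2 - 1) * (d - 1) / d) * (Nat.totient d : ℝ) := by
    rw [Finset.mul_sum]
    apply Finset.sum_congr rfl
    intro d hd
    obtain ⟨hd1, hd⟩ := Finset.mem_erase.1 hd
    obtain ⟨⟨e, he⟩, hne⟩ := Nat.mem_divisors.1 hd
    have hd0 : 0 < d := by
      rcases Nat.eq_zero_or_pos d with h | h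
      · rw [h] at he; omega
      · exact h
    rw [mm, if_neg hd1, he, Nat.mul_div_cancel_left _ hd0, mul_assoc, Nat.mul_div_cancel_left _ hd0]
    have h3 : p ^ 2 = e * (d - 1) + (e + 1) := by
      have : e * (d - 1) + e = d * e := by
        obtain ⟨d', rfl⟩ : ∃ d', d = d' + 1 := ⟨d - 1, by omega⟩
        simp; ring
      omega
    rw [h3, pow_add 2 (e * (d - 1)) (e + 1)]
    field_simp
  rw [this, landauShortIntervalConstant, mm, if_pos rfl]
  simp only [Nat.totient_one, Nat.cast_one]
  field_simp

lemma sum_pow {G : Type*} [CommGroup G] [Fintype G] [IsCyclic G] (k n : ℕ) (hkn : k * n = Fintype.card G)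
    (g : ℕ → ℝ) : ∑ u : G, g (orderOf (u ^ k)) = k * ∑ d ∈ n.divisors, (Nat.totient d : ℝ) * g d := by
  classical
  have hc : 0 < Fintype.card G := Fintype.card_pos
  have hk : 0 < k := Nat.pos_of_ne_zero (by rintro rfl; omega)
  have hn : 0 < n := Nat.pos_of_ne_zero (by rintro rfl; omega)
  set W := Finset.univ.filter fun y : G => y ^ n = 1 with hW
  have hWc : W.card ≤ n := IsCyclic.card_pow_eq_one_le hn
  have hmaps : ∀ u ∈ (Finset.univ : Finset G), u ^ k ∈ W := by
    intro u _
    simp only [hW, Finset.mem_filter, Finset.mem_univ, true_and]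
    rw [← pow_mul, hkn, pow_card_eq_one]
  have hfib : ∀ y ∈ W, (Finset.univ.filter fun u : G => u ^ k = y).card ≤ k := by
    intro y _
    rcases Finset.eq_empty_or_nonempty (Finset.univ.filter fun u : G => u ^ k = y) with h0 | ⟨u₀, hu₀⟩
    · rw [h0]; simp
    · refine le_trans ?_ (IsCyclic.card_pow_eq_one_le (α := G) hk)
      simp only [Finset.mem_filter, Finset.mem_univ, true_and] at hu₀
      apply Finset.card_le_card_of_injOn (fun u => u * u₀⁻¹)
      · intro u hu
        simp only [Finset.coe_filter, Finset.mem_univ, true_and, Set.mem_ofPred_eq] at hu ⊢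
        rw [mul_pow, inv_pow, hu, hu₀, mul_inv_cancel]
      · intro u _ v _ h
        exact mul_right_cancel h
  have hsum : ∑ y ∈ W, (Finset.univ.filter fun u : G => u ^ k = y).card = Fintype.card G := by
    rw [← Finset.card_eq_sum_card_fiberwise (f := fun u : G => u ^ k) (s := Finset.univ) (t := W) hmaps, Finset.card_univ]
  have hsum' : ∑ y ∈ W, (Finset.univ.filter fun u : G => u ^ k = y).card = ∑ y ∈ W, k := by
    apply le_antisymm (Finset.sum_le_sum hfib)
    rw [hsum, ← hkn, Finset.sum_const, smul_eq_mul, mul_comm]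
    exact Nat.mul_le_mul_left _ hWc
  have hfib' := (Finset.sum_eq_sum_iff_of_le hfib).1 hsum'
  rw [← Finset.sum_fiberwise_of_maps_to hmaps, Finset.mul_sum]
  have h1 : ∀ y ∈ W, ∑ u ∈ Finset.univ.filter (fun u : G => u ^ k = y), g (orderOf (u ^ k)) = k * g (orderOf y) := by
    intro y hy
    have h0 := Finset.sum_congr (s₁ := Finset.univ.filter (fun u : G => u ^ k = y)) rfl
      (f := fun u => g (orderOf (u ^ k))) (g := fun _ => g (orderOf y))
      (fun u hu => by rw [(Finset.mem_filter.1 hu).2])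
    rw [h0, Finset.sum_const, hfib' y hy, nsmul_eq_mul]
  rw [Finset.sum_congr rfl h1]
  have hm2 : ∀ y ∈ W, orderOf y ∈ n.divisors := by
    intro y hy
    rw [Nat.mem_divisors]
    exact ⟨orderOf_dvd_of_pow_eq_one (Finset.mem_filter.1 hy).2, hn.ne'⟩
  rw [← Finset.sum_fiberwise_of_maps_to hm2]
  apply Finset.sum_congr rfl
  intro d hd
  have hdn := (Nat.mem_divisors.1 hd).1
  have h2 : (W.filter fun y => orderOf y = d) = Finset.univ.filter fun y : G => orderOf y = d := by
    ext y
    simp only [hW, Finset.mem_filter, Finset.mem_univ, true_and, and_iff_right_iff_imp]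
    rintro rfl
    exact orderOf_dvd_iff_pow_eq_one.1 hdn
  have h3 : (Finset.univ.filter fun y : G => orderOf y = d).card = Nat.totient d :=
    IsCyclic.card_orderOf_eq_totient (hdn.trans (Dvd.intro_left k (by simpa using hkn)))
  rw [h2]
  have h4 := Finset.sum_congr (s₁ := Finset.univ.filter (fun y : G => orderOf y = d)) rfl
      (f := fun y => (k : ℝ) * g (orderOf y)) (g := fun _ => (k : ℝ) * g d)
      (fun y hy => by rw [(Finset.mem_filter.1 hy).2])
  rw [h4, Finset.sum_const, h3, nsmul_eq_mul]
  ring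

section total
variable {F : Type*} [Field F] [Fintype F]

open Classical in
lemma count_all (p m s k : ℕ) [hpf : Fact p.Prime] [CharP F p] (hp : Odd p)
    (hcard : Fintype.card F = p ^ (m + s)) (hQ : (p ^ 2 + 1) * (p ^ m + 1) + p ^ 2 + 2 ≤ p ^ s)
    (hk : k * (p ^ 2 - 1) = Fintype.card F - 1)
    (a : F) (ha : a ≠ 0) :
    |((Finset.univ.filter fun c : F => Good (fp p a c)).card : ℝ)
      - (p : ℝ) ^ (m + s) * mm p (orderOf ((-a) ^ k))|
      ≤ 2 * ((p : ℝ) ^ 2 + 2) * (p : ℝ) ^ s + 2 * (p : ℝ) ^ 2 := by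
  by_cases h1 : orderOf ((-a) ^ k) = 1
  · rw [mm, if_pos h1]
    exact count_one p m s k hp hcard hQ hk a ha h1
  · rw [mm, if_neg h1, mul_one_div]
    apply count_inj p m s k _ _ hp hcard hQ hk _ a ha rfl h1
    apply Nat.mul_div_cancel'
    apply orderOf_dvd_of_pow_eq_one
    rw [← pow_mul, hk]
    exact FiniteField.pow_card_sub_one_eq_one _ (neg_ne_zero.2 ha)

open Classical in
lemma sum_mm (p k : ℕ) (hp : 1 < p) (hk : k * (p ^ 2 - 1) = Fintype.card F - 1) :
    ∑ a ∈ (Finset.univ : Finset F).erase 0, mm p (orderOf ((-a) ^ k)) =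
      ((Fintype.card F : ℝ) - 1) * landauShortIntervalConstant p := by
  have hp2 := Nat.one_lt_pow two_ne_zero hp
  have h1 := sum_pow (G := Fˣ) k (p ^ 2 - 1) (by rw [hk, Fintype.card_units]) (mm p)
  rw [← const_eq p hp] at h1
  have h2 : ∑ a ∈ (Finset.univ : Finset F).erase 0, mm p (orderOf ((-a) ^ k)) = ∑ u : Fˣ, mm p (orderOf (u ^ k)) := by
    symm
    apply Finset.sum_bij (fun (u : Fˣ) _ => -(u : F))
    · intro u _; simp
    · intro u _ v _ h; exact Units.ext (neg_injective h)
    · intro b hb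
      refine ⟨-(Units.mk0 b (Finset.mem_erase.1 hb).1), Finset.mem_univ _, by simp⟩
    · intro u _
      rw [neg_neg, ← Units.val_pow_eq_pow_val, orderOf_units]
  rw [h2, h1, ← mul_assoc]
  congr 1
  have hc : 1 ≤ Fintype.card F := Fintype.card_pos
  have h3 := congrArg (Nat.cast : ℕ → ℝ) hk
  rw [Nat.cast_mul, Nat.cast_sub hc, Nat.cast_sub hp2.le] at h3
  push_cast at h3
  exact h3

open Classical in
lemma total (p m s k : ℕ) [hpf : Fact p.Prime] [CharP F p] (hp : Odd p)
    (hcard : Fintype.card F = p ^ (m + s)) (hQ : (p ^ 2 + 1) * (p ^ m + 1) + p ^ 2 + 2 ≤ p ^ s)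
    (hk : k * (p ^ 2 - 1) = Fintype.card F - 1) :
    |((Finset.univ.filter fun x : F × F => Good (fp p x.2 x.1)).card : ℝ)
      - (p : ℝ) ^ (m + s) * (((p : ℝ) ^ (m + s) - 1) * landauShortIntervalConstant p)|
      ≤ (p : ℝ) ^ (m + s) + (p : ℝ) ^ (m + s) * (2 * ((p : ℝ) ^ 2 + 2) * (p : ℝ) ^ s + 2 * (p : ℝ) ^ 2) := by
  set E := 2 * ((p : ℝ) ^ 2 + 2) * (p : ℝ) ^ s + 2 * (p : ℝ) ^ 2 with hE
  have hE0 : 0 ≤ E := by positivity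
  have hqc : (Fintype.card F : ℝ) = (p : ℝ) ^ (m + s) := by rw [hcard]; push_cast; rfl
  have hs := sum_mm (F := F) p k hpf.out.one_lt hk
  rw [← hqc, ← hs]
  set n : F → ℝ := fun a => ((Finset.univ.filter fun c : F => Good (fp p a c)).card : ℝ) with hn
  have h1 : ((Finset.univ.filter fun x : F × F => Good (fp p x.2 x.1)).card : ℝ) = ∑ a : F, n a := by
    simp only [hn]
    rw [← Nat.cast_sum, Finset.card_filter, Fintype.sum_prod_type_right]
    simp only [Finset.card_filter]
  rw [h1, ← Finset.add_sum_erase _ n (Finset.mem_univ 0), Finset.mul_sum, add_sub_assoc, ← Finset.sum_sub_distrib]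
  refine (abs_add_le _ _).trans (add_le_add ?_ ?_)
  · simp only [hn, Nat.abs_cast]
    exact_mod_cast Finset.card_le_univ _
  · refine (Finset.abs_sum_le_sum_abs _ _).trans ?_
    refine (Finset.sum_le_sum (g := fun _ => E) ?_).trans ?_
    · intro a ha
      rw [hqc]
      exact count_all p m s k hp hcard hQ hk a (Finset.mem_erase.1 ha).1
    · rw [Finset.sum_const, nsmul_eq_mul]
      apply mul_le_mul_of_nonneg_right _ hE0
      exact_mod_cast Finset.card_le_univ _

end total

lemma final_aux (p ν m : ℕ) [hpf : Fact p.Prime] (hp : Odd p) (hν : 1 ≤ ν) (hm : m ≤ 2 * ν)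
    (hQ : (p ^ 2 + 1) * (p ^ m + 1) + p ^ 2 + 2 ≤ p ^ (2 * ν - m)) :
    |(Nat.card {x : GaloisField p (2 * ν) × GaloisField p (2 * ν) //
            ∃ A B : Polynomial (GaloisField p (2 * ν)),
              Polynomial.X ^ (p ^ 2) + Polynomial.C x.2 * Polynomial.X +
                  Polynomial.C x.1 =
                A ^ 2 + Polynomial.X * B ^ 2} : ℝ) / ((p : ℝ) ^ (2 * ν)) ^ 2 - landauShortIntervalConstant p|
      ≤ (1 + |landauShortIntervalConstant p|) / (p : ℝ) ^ (2 * ν) + (4 * (p : ℝ) ^ 2 + 4) / (p : ℝ) ^ m := by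
  classical
  have : Fintype (GaloisField p (2 * ν)) := Fintype.ofFinite _
  set s := 2 * ν - m with hs
  have hms : m + s = 2 * ν := by omega
  have hcard : Fintype.card (GaloisField p (2 * ν)) = p ^ (m + s) := by
    rw [hms, ← Nat.card_eq_fintype_card, GaloisField.card p _ (by omega)]
  obtain ⟨k, hk⟩ : (p ^ 2 - 1) ∣ Fintype.card (GaloisField p (2 * ν)) - 1 := by
    rw [hcard, hms, pow_mul]
    exact Nat.sub_one_dvd_pow_sub_one _ _
  have key := total (F := GaloisField p (2 * ν)) p m s k hp hcard hQ (by rw [hk, mul_comm])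
  rw [Nat.card_eq_fintype_card, Fintype.card_subtype]
  change |(((Finset.univ.filter fun x : GaloisField p (2 * ν) × GaloisField p (2 * ν) => Good (fp p x.2 x.1)).card : ℕ) : ℝ) / _ - _| ≤ _
  set N : ℝ := (((Finset.univ.filter fun x : GaloisField p (2 * ν) × GaloisField p (2 * ν) => Good (fp p x.2 x.1)).card : ℕ) : ℝ)
  set c := landauShortIntervalConstant p
  rw [← hms]
  have hp1 : (1 : ℝ) ≤ p := by exact_mod_cast hpf.out.one_lt.le
  have hps : (1 : ℝ) ≤ (p : ℝ) ^ s := one_le_pow₀ hp1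
  have hpm : (0 : ℝ) < (p : ℝ) ^ m := by positivity
  set q : ℝ := (p : ℝ) ^ (m + s) with hq
  have hq0 : 0 < q := by positivity
  have hqq : q = (p : ℝ) ^ m * (p : ℝ) ^ s := by rw [hq, pow_add]
  have e1 : N / q ^ 2 - c = ((N - q * ((q - 1) * c)) - q * c) / q ^ 2 := by
    field_simp; ring
  rw [e1, abs_div, abs_of_pos (show 0 < q ^ 2 by positivity), div_le_iff₀ (by positivity)]
  refine (abs_sub _ _).trans ?_
  rw [abs_mul, abs_of_pos hq0]
  have hE : 2 * ((p : ℝ) ^ 2 + 2) * (p : ℝ) ^ s + 2 * (p : ℝ) ^ 2 ≤ (4 * (p : ℝ) ^ 2 + 4) * (p : ℝ) ^ s := by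
    nlinarith [sq_nonneg (p : ℝ)]
  have e2 : ((1 + |c|) / q + (4 * (p : ℝ) ^ 2 + 4) / (p : ℝ) ^ m) * q ^ 2 = q * (1 + |c|) + q * ((4 * (p : ℝ) ^ 2 + 4) * (p : ℝ) ^ s) := by
    rw [add_mul]
    congr 1
    · field_simp
    · rw [hqq]; field_simp
  rw [e2]
  have := mul_le_mul_of_nonneg_left hE hq0.le
  linarith

end LSI

/-- For `p` an odd prime, `q = p^(2ν)` and `f₀ = T^(p²)`, the density of sums of two
squares in the short interval `{T^(p²) + a₁T + a₀ : a₀, a₁ ∈ F_q}` converges to `c_p` as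
`ν → ∞`. -/
theorem density_in_short_interval_tendsto
    (p : ℕ) [Fact p.Prime] (hodd : Odd p) :
    Filter.Tendsto
      (fun ν : ℕ =>
        (Nat.card {x : GaloisField p (2 * ν) × GaloisField p (2 * ν) //
            ∃ A B : Polynomial (GaloisField p (2 * ν)),
              Polynomial.X ^ (p ^ 2) + Polynomial.C x.2 * Polynomial.X +
                  Polynomial.C x.1 =
                A ^ 2 + Polynomial.X * B ^ 2} : ℝ) / ((p : ℝ) ^ (2 * ν)) ^ 2)
      Filter.atTop (nhds (landauShortIntervalConstant p)) := by
  have hp : 1 < p := (Fact.out : p.Prime).one_lt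
  have hpR : (1 : ℝ) < p := by exact_mod_cast hp
  have hT : ∀ K : ℝ, Filter.Tendsto (fun n : ℕ => K / (p : ℝ) ^ n) Filter.atTop (nhds 0) := fun K =>
    tendsto_const_nhds.div_atTop (tendsto_pow_atTop_atTop_of_one_lt hpR)
  rw [Metric.tendsto_atTop]
  intro ε hε
  obtain ⟨m, hm⟩ := ((hT (4 * (p : ℝ) ^ 2 + 4)).eventually (gt_mem_nhds (half_pos hε))).exists
  obtain ⟨n, hn⟩ := Filter.eventually_atTop.1
    ((hT (1 + |landauShortIntervalConstant p|)).eventually (gt_mem_nhds (half_pos hε)))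
  refine ⟨1 + m + n + ((p ^ 2 + 1) * (p ^ m + 1) + p ^ 2 + 2), fun ν hν => ?_⟩
  rw [Real.dist_eq]
  have hQ : (p ^ 2 + 1) * (p ^ m + 1) + p ^ 2 + 2 ≤ p ^ (2 * ν - m) := by
    refine le_trans ?_ (Nat.lt_pow_self hp).le
    omega
  have h1 := LSI.final_aux p ν m hodd (by omega) (by omega) hQ
  have h2 := hn (2 * ν) (by omega)
  linarith
end

section
/- Let q be an odd prime power and let k ≥ 1 be an integer. For a ∈ F_q, the polynomial T^{2k+1} + a ∈ F_q[T] is a sum of two squares if and only if a is a square in F_q. -/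
/-- For `q` odd and `k ≥ 1`, the polynomial `T^(2k+1) + a ∈ F_q[T]` is a sum of two
squares (`A² + T·B²`) if and only if `a` is a square in `F_q`. -/
theorem X_pow_add_C_sum_of_two_squares_iff
    (F : Type) [Field F] [Fintype F] (hodd : Odd (Fintype.card F))
    (k : ℕ) (hk : 1 ≤ k) (a : F) :
    (∃ A B : Polynomial F,
        Polynomial.X ^ (2 * k + 1) + Polynomial.C a =
          A ^ 2 + Polynomial.X * B ^ 2) ↔ IsSquare a := by
  constructor
  · rintro ⟨A, B, h⟩
    have h0 := congrArg (Polynomial.eval 0) h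
    simp at h0
    exact ⟨A.eval 0, by rw [h0, sq]⟩
  · rintro ⟨c, rfl⟩
    refine ⟨Polynomial.C c, Polynomial.X ^ k, ?_⟩
    rw [Polynomial.C_mul]
    ring
end

section
/- Let q be an odd prime power and let k ≥ 1 be an integer. Then the number of elements a ∈ F_q such that T^{2k+1} + a is a sum of two squares equals (q + 1)/2. -/
theorem card_isSquare_aux (F : Type) [Field F] [Fintype F] (hodd : Odd (Fintype.card F)) :
    Nat.card {a : F // IsSquare a} = (Fintype.card F + 1) / 2 := by
  classical
  have hF : ringChar F ≠ 2 := by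
    intro h
    have := FiniteField.even_card_of_char_two h
    rw [Nat.odd_iff] at hodd
    omega
  have h0 := quadraticChar_sum_zero hF
  have key : ∀ a : F, (2 : ℤ) * (if IsSquare a then 1 else 0)
      = quadraticChar F a + 1 + (if a = 0 then 1 else 0) := by
    intro a
    by_cases ha : a = 0
    · simp [ha]
    · by_cases hs : IsSquare a
      · rw [(quadraticChar_one_iff_isSquare ha).2 hs]; simp [ha, hs]
      · rw [quadraticChar_neg_one_iff_not_isSquare.2 hs]; simp [ha, hs]
  have h := Finset.sum_congr (rfl : (Finset.univ : Finset F) = Finset.univ) (fun a _ => key a)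
  rw [← Finset.mul_sum, Finset.sum_add_distrib, Finset.sum_add_distrib, h0] at h
  rw [Nat.card_eq_fintype_card, Fintype.card_subtype]
  simp at h
  omega

/-- For `q` odd and `k ≥ 1`, the number of `a ∈ F_q` such that `T^(2k+1) + a` is a sum of
two squares (`A² + T·B²`) equals `(q + 1)/2`. -/
theorem card_X_pow_add_C_sum_of_two_squares
    (F : Type) [Field F] [Fintype F] (hodd : Odd (Fintype.card F))
    (k : ℕ) (hk : 1 ≤ k) :
    Nat.card {a : F // ∃ A B : Polynomial F,
        Polynomial.X ^ (2 * k + 1) + Polynomial.C a =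
          A ^ 2 + Polynomial.X * B ^ 2} = (Fintype.card F + 1) / 2 := by
  rw [← card_isSquare_aux F hodd]
  refine Nat.card_congr (Equiv.subtypeEquivRight fun a => ⟨?_, ?_⟩)
  · rintro ⟨A, B, h⟩
    refine ⟨A.eval 0, ?_⟩
    have := congrArg (Polynomial.eval 0) h
    simpa [pow_two] using this
  · rintro ⟨b, rfl⟩
    refine ⟨Polynomial.C b, Polynomial.X ^ k, ?_⟩
    rw [Polynomial.C_mul]
    ring
end

section
/- Let p be an odd prime and let k be the finite field with p² elements. Consider the F₂-vector space V of all functions k → F₂, with the group of affine transformations acting by (σ_{a,b} · ξ)(x) = ξ(ax + b) for a ∈ k^×, b ∈ k. The only subspaces of V invariant under all these transformations are: the zero subspace, the span of the constant function 1, the subspace of all ξ with ∑_{x ∈ k} ξ(x) = 0, and V itself. -/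
section Helpers

variable {k : Type} [Field k] [Fintype k]

/-- The group algebra of the additive group of `k` over `F₂`. -/
abbrev GA (k : Type) [Field k] := AddMonoidAlgebra (ZMod 2) k

lemma GA_pow (h2 : (2 : k) ≠ 0) (f : GA k) : f ^ 2 ^ (Fintype.card k - 1) = f := by
  haveI : CharP (GA k) 2 := charP_of_injective_algebraMap' (ZMod 2) 2
  induction f using AddMonoidAlgebra.induction_linear with
  | zero => simp
  | add f g hf hg => rw [add_pow_char_pow, hf, hg]
  | single m r =>
    rw [AddMonoidAlgebra.single_pow, ZMod.pow_card_pow, nsmul_eq_mul]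
    push_cast
    rw [FiniteField.pow_card_sub_one_eq_one _ h2, one_mul]

/-- A translation-invariant subspace, as an ideal of the group algebra. -/
def toIdeal (U : Submodule (ZMod 2) (k → ZMod 2))
    (hU : ∀ (b : k), ∀ ξ ∈ U, (fun x => ξ (x + b)) ∈ U) : Ideal (GA k) where
  carrier := {f | (fun x => f.coeff x) ∈ U}
  zero_mem' := by
    change _ ∈ U
    exact U.zero_mem
  add_mem' := by
    intro f g hf hg
    exact U.add_mem hf hg
  smul_mem' := by
    intro c f hf
    change _ ∈ U
    induction c using AddMonoidAlgebra.induction_linear with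
    | zero =>
      convert U.zero_mem
      simp
    | add c d hc hd =>
      convert U.add_mem hc hd
      simp [add_mul]
    | single m r =>
      convert U.smul_mem r (hU (-m) _ hf) using 1
      funext x
      simp [add_comm]

lemma coeff_mul_sum (e f : GA k) (x : k) :
    (e * f).coeff x = ∑ y, e.coeff y * f.coeff (x - y) := by
  induction e using AddMonoidAlgebra.induction_linear with
  | zero => simp
  | add c d hc hd => simp [add_mul, hc, hd, Finset.sum_add_distrib]
  | single m r =>
    classical
    simp [Finsupp.single_apply, add_comm, sub_eq_add_neg]

lemma GA_finite : Finite (GA k) :=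
  Finite.of_injective (fun f : GA k => (fun x => f.coeff x)) (by
    intro f g h
    ext x
    exact congrFun h x)

lemma GA_exists_idem (h2 : (2 : k) ≠ 0) (I : Ideal (GA k)) : ∃ e ∈ I, ∀ f ∈ I, e * f = f := by
  haveI := GA_finite (k := k)
  have hI : IsIdempotentElem I := by
    refine le_antisymm Ideal.mul_le_left ?_
    intro f hf
    rw [← GA_pow h2 f]
    have hc : 1 < Fintype.card k := Fintype.one_lt_card
    obtain ⟨n, hn⟩ : ∃ n, 2 ^ (Fintype.card k - 1) = n + 2 := by
      refine ⟨2 ^ (Fintype.card k - 1) - 2, ?_⟩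
      have : 2 ^ 1 ≤ 2 ^ (Fintype.card k - 1) := Nat.pow_le_pow_right (by norm_num) (by omega)
      omega
    rw [hn, pow_add, pow_two]
    exact Ideal.mul_mem_left _ _ (Ideal.mul_mem_mul hf hf)
  obtain ⟨e, he, hIe⟩ := (Ideal.isIdempotentElem_iff_of_fg I (IsNoetherian.noetherian I)).1 hI
  refine ⟨e, hIe ▸ Submodule.mem_span_singleton_self e, fun f hf => ?_⟩
  rw [hIe] at hf
  obtain ⟨c, rfl⟩ := Submodule.mem_span_singleton.1 hf
  rw [smul_eq_mul, mul_left_comm, he.eq]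

lemma sum_eq_of (α β : ZMod 2) (e f : GA k) (h0 : e.coeff 0 = α)
    (h1 : ∀ x, x ≠ 0 → e.coeff x = β) (x : k) :
    (e * f).coeff x = (α - β) * f.coeff x + β * ∑ y, f.coeff y := by
  classical
  rw [coeff_mul_sum]
  have : ∀ y, e.coeff y = (if y = 0 then (α - β) else 0) + β := by
    intro y
    by_cases hy : y = 0
    · simp [hy, h0]
    · simp [hy, h1]
  simp only [this, add_mul, Finset.sum_add_distrib, ← Finset.mul_sum]
  congr 1
  · simp
  · exact congrArg (β * ·) (Equiv.sum_comp (Equiv.subLeft x) (fun y => f.coeff y))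

lemma mem_char (h2 : (2 : k) ≠ 0) (U : Submodule (ZMod 2) (k → ZMod 2))
    (hU : ∀ (a : k) (b : k), a ≠ 0 → ∀ ξ ∈ U, (fun x => ξ (a * x + b)) ∈ U) :
    ∃ α β : ZMod 2, ∀ ξ, ξ ∈ U ↔ ∀ x, (α - β) * ξ x + β * ∑ y, ξ y = ξ x := by
  have hT : ∀ (b : k), ∀ ξ ∈ U, (fun x => ξ (x + b)) ∈ U := fun b ξ hξ => by
    simpa using hU 1 b one_ne_zero ξ hξ
  obtain ⟨e, heI, he⟩ := GA_exists_idem h2 (toIdeal U hT)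
  have hmul : ∀ a : k, a ≠ 0 → ∀ x, e.coeff (a * x) = e.coeff x := by
    intro a ha
    let s : k ≃+ k := AddEquiv.mk' (Equiv.mulLeft₀ a ha) (fun x y => mul_add a x y)
    let D := AddMonoidAlgebra.domCongr (ZMod 2) (ZMod 2) s
    have hD : ∀ (f : GA k) x, (D f).coeff x = f.coeff (a⁻¹ * x) := by
      intro f x
      rw [AddMonoidAlgebra.coeff_domCongr]
      rfl
    have hDs : ∀ (f : GA k) x, (D.symm f).coeff x = f.coeff (a * x) := by
      intro f x
      have := hD (D.symm f) (a * x)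
      rw [D.apply_symm_apply, inv_mul_cancel_left₀ ha] at this
      exact this.symm
    have h1 : D e ∈ toIdeal U hT := by
      change _ ∈ U
      have := hU a⁻¹ 0 (inv_ne_zero ha) _ heI
      simpa [hD] using this
    have h1' : D.symm e ∈ toIdeal U hT := by
      change _ ∈ U
      have := hU a 0 ha _ heI
      simpa [hDs] using this
    have h3 : e * D.symm e = D.symm e := he _ h1'
    have h4 : e * D e = D e := he _ h1
    have h5 := congrArg D.symm h4
    rw [map_mul, D.symm_apply_apply, mul_comm] at h5
    have h6 : D.symm e = e := h3.symm.trans h5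
    intro x
    rw [← hDs, h6]
  refine ⟨e.coeff 0, e.coeff 1, fun ξ => ?_⟩
  let f : GA k := AddMonoidAlgebra.ofCoeff (Finsupp.equivFunOnFinite.symm ξ)
  have hf : ∀ x, f.coeff x = ξ x := fun x => rfl
  have key := sum_eq_of (e.coeff 0) (e.coeff 1) e f rfl
    (fun x hx => by simpa using hmul x hx 1)
  have hmem : ξ ∈ U ↔ e * f = f := by
    constructor
    · intro h
      exact he f h
    · intro h
      have : f ∈ toIdeal U hT := h ▸ Ideal.mul_mem_right f _ heI
      exact this
  rw [hmem]
  simp only [hf] at key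
  constructor
  · intro h x
    rw [← key, h, hf]
  · intro h
    ext x
    rw [key, h, hf]

end Helpers

/-- Let `p` be an odd prime and `k` the field with `p²` elements. The only subspaces of
the `F₂`-space of functions `k → F₂` invariant under all affine substitutions
`ξ ↦ (x ↦ ξ(ax + b))` (`a ∈ k×`, `b ∈ k`) are `0`, the span of the constant function `1`,
the hyperplane `{ξ : ∑_{x ∈ k} ξ(x) = 0}`, and the whole space. -/
theorem invariant_subspaces_affine_action
    (p : ℕ) (hp : p.Prime) (hodd : Odd p)
    (k : Type) [Field k] [Fintype k] (hcard : Fintype.card k = p ^ 2)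
    (U : Submodule (ZMod 2) (k → ZMod 2))
    (hU : ∀ (a : k) (b : k), a ≠ 0 → ∀ ξ ∈ U, (fun x => ξ (a * x + b)) ∈ U) :
    U = ⊥ ∨
    U = Submodule.span (ZMod 2) {(fun _ => 1 : k → ZMod 2)} ∨
    U = LinearMap.ker (∑ x : k, LinearMap.proj (R := ZMod 2)
          (φ := fun _ : k => ZMod 2) x) ∨
    U = ⊤ := by
  have hc : Odd (Fintype.card k) := hcard ▸ hodd.pow
  have h2 : (2 : k) ≠ 0 := by
    intro h
    have hr : ringChar k = 2 := by
      rcases (Nat.dvd_prime Nat.prime_two).1 ((ringChar.spec k 2).1 (by exact_mod_cast h)) with h | h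
      · exact absurd h (CharP.ringChar_ne_one)
      · exact h
    have := FiniteField.even_card_of_char_two hr
    rw [Nat.odd_iff] at hc
    omega
  have hc1 : (Fintype.card k : ZMod 2) = 1 := ZMod.natCast_eq_one_iff_odd.2 hc
  obtain ⟨α, β, h⟩ := mem_char h2 U hU
  have hz : ∀ a : ZMod 2, a = 0 ∨ a = 1 := by decide
  rcases hz α with rfl | rfl <;> rcases hz β with rfl | rfl
  · left
    ext ξ
    rw [h, Submodule.mem_bot, funext_iff]
    simp [eq_comm]
  · right; right; left
    ext ξ
    rw [h, LinearMap.mem_ker]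
    have : (0 - 1 : ZMod 2) = 1 := by decide
    simp [this]
  · right; right; right
    ext ξ
    simp [h]
  · right; left
    ext ξ
    rw [h, Submodule.mem_span_singleton]
    simp only [sub_self, zero_mul, zero_add, one_mul]
    constructor
    · intro hx
      exact ⟨∑ y, ξ y, by funext x; simpa using hx x⟩
    · rintro ⟨c, rfl⟩ x
      simp [hc1]
end

section
/- Let p be an odd prime, let k be the finite field with p² elements, let F be a field extension of k, let K = F(A₀, A₁) be the field of rational functions in two independent variables A₀, A₁ over F, and set f(T) = T^{p²} + A₁T + A₀ ∈ K[T]. Then the Galois group of f over K is isomorphic to the group Aff(k) of affine transformations x ↦ ax + b (a ∈ k^×, b ∈ k) of k, which has order p²(p² − 1), and the Galois group of f(−T²) over K has order 2^{p²} · p² · (p² − 1). -/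
open Polynomial

/-- multiquadratic extensions -/
theorem multiquad {M : Type} [Field M] {ι : Type} [DecidableEq ι] (h2 : (2 : M) ≠ 0)
    (x : ι → M) (s : Finset ι) :
    ∀ (L : Type) [Field L] [Algebra L M] (a : ι → L),
      (∀ i ∈ s, x i ^ 2 = algebraMap L M (a i)) →
      (∀ t : Finset ι, t ⊆ s → t.Nonempty → ¬ IsSquare (∏ i ∈ t, a i)) →
      IntermediateField.adjoin L (Set.image x (s : Set ι)) = ⊤ → Module.finrank L M = 2 ^ s.card := by
  induction s using Finset.induction_on with
  | empty =>
    intro L _ _ a hx hs htop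
    simp only [Finset.coe_empty, Set.image_empty, IntermediateField.adjoin_empty] at htop
    rw [Finset.card_empty, pow_zero, ← IntermediateField.finrank_top', ← htop,
      IntermediateField.finrank_bot]
  | insert j s hj ih =>
    intro L _ _ a hx hs htop
    have hinj : Function.Injective (algebraMap L M) := (algebraMap L M).injective
    have hxj : x j ^ 2 = algebraMap L M (a j) := hx j (Finset.mem_insert_self _ _)
    have hnsq : ¬ IsSquare (a j) := by
      have := hs {j} (by simp) (by simp)
      simpa using this
    have haj0 : a j ≠ 0 := by
      intro h; apply hnsq; rw [h]; exact IsSquare.zero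
    have hmon : (X ^ 2 - C (a j) : L[X]).Monic := monic_X_pow_sub_C _ two_ne_zero
    have hdeg : (X ^ 2 - C (a j) : L[X]).natDegree = 2 := natDegree_X_pow_sub_C
    have hroot : aeval (x j) (X ^ 2 - C (a j) : L[X]) = 0 := by simp [hxj]
    have hirr : Irreducible (X ^ 2 - C (a j) : L[X]) := by
      rw [irreducible_iff_roots_eq_zero_of_degree_le_three (by rw [hdeg]) (by rw [hdeg]; norm_num)]
      rw [Multiset.eq_zero_iff_forall_notMem]
      intro y hy
      rw [mem_roots hmon.ne_zero] at hy
      simp only [IsRoot.def, eval_sub, eval_pow, eval_X, eval_C] at hy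
      exact hnsq ⟨y, by rw [← sq]; exact (sub_eq_zero.1 hy).symm⟩
    have hmin : minpoly L (x j) = X ^ 2 - C (a j) :=
      (minpoly.eq_of_irreducible_of_monic hirr hroot hmon).symm
    have hint : IsIntegral L (x j) := ⟨_, hmon, by simpa [aeval_def] using hroot⟩
    have hfr : Module.finrank L (IntermediateField.adjoin L {x j}) = 2 := by
      rw [IntermediateField.adjoin.finrank hint, hmin, hdeg]
    let L' := IntermediateField.adjoin L {x j}
    have hform : ∀ z : L', ∃ u v : L, (z : M) = algebraMap L M u + algebraMap L M v * x j := by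
      intro z
      have hz : (z : M) ∈ Algebra.adjoin L {x j} := by
        have h1 : (z : M) ∈ (IntermediateField.adjoin L {x j}).toSubalgebra := z.2
        rwa [IntermediateField.adjoin_simple_toSubalgebra_of_isAlgebraic hint.isAlgebraic] at h1
      generalize (z : M) = w at hz
      induction hz using Algebra.adjoin_induction with
      | mem y hy => exact ⟨0, 1, by rw [Set.mem_singleton_iff.1 hy]; simp⟩
      | algebraMap r => exact ⟨r, 0, by simp⟩
      | add y y' _ _ h h' =>
        obtain ⟨u, v, h⟩ := h
        obtain ⟨u', v', h'⟩ := h'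
        exact ⟨u + u', v + v', by rw [h, h', map_add, map_add]; ring⟩
      | mul y y' _ _ h h' =>
        obtain ⟨u, v, h⟩ := h
        obtain ⟨u', v', h'⟩ := h'
        refine ⟨u * u' + v * v' * a j, u * v' + u' * v, ?_⟩
        rw [h, h']
        simp only [map_add, map_mul]
        linear_combination (algebraMap L M v * algebraMap L M v') * hxj
    have key := ih L' (fun i => algebraMap L L' (a i)) (fun i hi => hx i (Finset.mem_insert_of_mem hi))
      (by
        rintro t ht hne ⟨z, hz⟩
        obtain ⟨u, v, huv⟩ := hform z
        have hz' : algebraMap L M (∏ i ∈ t, a i) = (z : M) * z := by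
          have := congrArg (algebraMap L' M) hz
          rw [← map_prod, ← IsScalarTower.algebraMap_apply, map_mul] at this
          exact this
        rw [huv] at hz'
        have e : algebraMap L M (∏ i ∈ t, a i - u ^ 2 - v ^ 2 * a j)
            = algebraMap L M (2 * u * v) * x j := by
          simp only [map_sub, map_mul, map_pow, map_ofNat] at hz' ⊢
          rw [hz']; linear_combination (-(algebraMap L M v)^2) * hxj + 2 * algebraMap L M v ^ 2 * hxj
        by_cases huv0 : 2 * u * v = 0
        · rw [huv0, map_zero, zero_mul, map_eq_zero] at e
          have h2' : (2 : L) ≠ 0 := by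
            intro h; apply h2; rw [← map_ofNat (algebraMap L M) 2, h, map_zero]
          rcases mul_eq_zero.1 huv0 with h | h
          · have hu : u = 0 := (mul_eq_zero.1 h).resolve_left h2'
            refine hs (insert j t) (Finset.insert_subset_insert _ ht) (by simp) ?_
            rw [Finset.prod_insert (fun h => hj (ht h))]
            exact ⟨v * a j, by rw [hu] at e; linear_combination a j * e⟩
          · refine hs t (ht.trans (Finset.subset_insert _ _)) hne ⟨u, ?_⟩
            rw [h] at e; linear_combination e
        · apply hnsq
          refine ⟨(∏ i ∈ t, a i - u ^ 2 - v ^ 2 * a j) / (2 * u * v), hinj ?_⟩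
          have h0 : algebraMap L M (2 * u * v) ≠ 0 := by simpa using huv0
          rw [map_mul, map_div₀, e, mul_div_cancel_left₀ _ h0, ← hxj, sq])
      (by
        rw [Finset.coe_insert, Set.image_insert_eq, Set.insert_eq,
          ← IntermediateField.adjoin_adjoin_left] at htop
        exact IntermediateField.restrictScalars_injective L htop)
    rw [← Module.finrank_mul_finrank L L' M, key, hfr, Finset.card_insert_of_notMem hj, pow_succ,
      mul_comm]

theorem nonsq_aux {k F : Type} [Field k] [Field F] [Algebra k F]
    {L : Type} [Field L] [Algebra (MvPolynomial (Fin 2) F) L]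
    [IsFractionRing (MvPolynomial (Fin 2) F) L] (t : Finset k) (ht : t.Nonempty) :
    ¬ IsSquare (∏ c ∈ t, -(algebraMap (MvPolynomial (Fin 2) F) L
      (MvPolynomial.X 0 + MvPolynomial.C (algebraMap k F c) * MvPolynomial.X 1))) := by
  rintro ⟨z, hz⟩
  simp only [← map_neg] at hz
  rw [← map_prod] at hz
  set d : MvPolynomial (Fin 2) F := ∏ c ∈ t, -(MvPolynomial.X 0 + MvPolynomial.C (algebraMap k F c) * MvPolynomial.X 1) with hd
  have hint : IsIntegral (MvPolynomial (Fin 2) F) z := by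
    refine ⟨X ^ 2 - C d, monic_X_pow_sub_C _ two_ne_zero, ?_⟩
    simp [hz, sq]
  obtain ⟨e, he⟩ := IsIntegrallyClosed.isIntegral_iff.1 hint
  rw [← he, ← map_mul] at hz
  have hde := IsFractionRing.injective (MvPolynomial (Fin 2) F) L hz
  have h3 := congrArg (MvPolynomial.aeval (R := F) (![(X : F[X]), 1])) hde
  rw [hd, map_prod, map_mul] at h3
  simp only [map_neg, map_add, map_mul, MvPolynomial.aeval_X, MvPolynomial.algHom_C] at h3
  set e' := MvPolynomial.aeval (R := F) (![(X : F[X]), 1]) e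
  have h4 : (∏ c ∈ t, -(X - C (-(algebraMap k F c)))) = e' * e' := by
    rw [← h3]; refine Finset.prod_congr rfl fun c _ => ?_
    simp [Polynomial.algebraMap_eq]
  rw [Finset.prod_neg] at h4
  have hsep : (∏ c ∈ t, (X - C (-(algebraMap k F c)))).Separable := by
    rw [separable_prod_X_sub_C_iff']
    intro x _ y _ h
    exact (algebraMap k F).injective (neg_injective h)
  have hdvd : e' * e' ∣ ∏ c ∈ t, (X - C (-(algebraMap k F c))) := by
    refine ⟨(-1) ^ t.card, ?_⟩
    rw [← h4]
    rw [mul_comm, ← mul_assoc, ← mul_pow]; simp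
  have hu := hsep.squarefree _ hdvd
  have h5 : IsUnit (∏ c ∈ t, (X - C (-(algebraMap k F c)))) := by
    have := hu.mul hu
    rw [← h4] at this
    exact isUnit_of_mul_isUnit_right this
  have h6 := natDegree_eq_zero_of_isUnit h5
  rw [natDegree_prod_of_monic _ _ (fun i _ => monic_X_sub_C _)] at h6
  simp only [natDegree_X_sub_C, Finset.sum_const, smul_eq_mul, mul_one] at h6
  exact ht.card_ne_zero h6

theorem phi_inj (F : Type) [Field F] (q : ℕ) (hq : 2 ≤ q) :
    Function.Injective (MvPolynomial.aeval (R := F)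
      (![MvPolynomial.X 1 ^ (q - 1) * MvPolynomial.X 0 - MvPolynomial.X 0 ^ q,
        - MvPolynomial.X 1 ^ (q - 1)] : Fin 2 → MvPolynomial (Fin 2) F)) := by
  set x := (![MvPolynomial.X 1 ^ (q - 1) * MvPolynomial.X 0 - MvPolynomial.X 0 ^ q,
        - MvPolynomial.X 1 ^ (q - 1)] : Fin 2 → MvPolynomial (Fin 2) F) with hx
  have m0 : x 0 ∈ Algebra.adjoin F (Set.range x) := Algebra.subset_adjoin ⟨0, rfl⟩
  have m1 : x 1 ∈ Algebra.adjoin F (Set.range x) := Algebra.subset_adjoin ⟨1, rfl⟩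
  let S := Algebra.adjoin F (Set.range x)
  have i1 : IsIntegral S (MvPolynomial.X 1 : MvPolynomial (Fin 2) F) := by
    refine ⟨X ^ (q - 1) + C ⟨x 1, m1⟩, monic_X_pow_add_C _ (by omega), ?_⟩
    simp only [eval₂_add, eval₂_X_pow, eval₂_C]
    change MvPolynomial.X 1 ^ (q-1) + x 1 = 0
    simp [hx]
  have i0 : IsIntegral S (MvPolynomial.X 0 : MvPolynomial (Fin 2) F) := by
    refine ⟨X ^ q + (C ⟨x 1, m1⟩ * X + C ⟨x 0, m0⟩), ?_, ?_⟩
    · apply monic_X_pow_add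
      refine lt_of_le_of_lt degree_linear_le ?_
      exact_mod_cast hq
    · simp only [eval₂_add, eval₂_X_pow, eval₂_C, eval₂_mul, eval₂_X]
      change MvPolynomial.X 0 ^ q + (x 1 * MvPolynomial.X 0 + x 0) = 0
      simp only [hx, Matrix.cons_val_zero, Matrix.cons_val_one]
      ring
  have alg : Algebra.IsAlgebraic S (MvPolynomial (Fin 2) F) := by
    refine ⟨fun y => IsIntegral.isAlgebraic ?_⟩
    induction y using MvPolynomial.induction_on with
    | C a => exact isIntegral_algebraMap (x := (algebraMap F S a))
    | add p q hp hq => exact hp.add hq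
    | mul_X p i hp =>
      refine hp.mul ?_
      fin_cases i
      · exact i0
      · exact i1
  have := Algebra.IsAlgebraic.isTranscendenceBasis_of_le_trdeg_of_finite F x
    (by rw [MvPolynomial.trdeg_of_isDomain]; simp)
  exact this.1

theorem factor_aux (p : ℕ) (hp : p.Prime) {k L : Type} [Field k] [Fintype k]
    (hcard : Fintype.card k = p ^ 2) [Field L] [CharP L p] (i : k →+* L) (α β : L) (hβ : β ≠ 0) :
    (X ^ (p ^ 2) + C (-β ^ (p ^ 2 - 1)) * X + C (β ^ (p ^ 2 - 1) * α - α ^ (p ^ 2)) : L[X])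
      = ∏ c : k, (X - C (α + i c * β)) := by
  have := Fact.mk hp
  have hq : 2 ≤ p ^ 2 := by nlinarith [hp.two_le]
  have hfac : (X ^ (p ^ 2) + C (-β ^ (p ^ 2 - 1)) * X + C (β ^ (p ^ 2 - 1) * α - α ^ (p ^ 2)) : L[X])
    = X ^ (p ^ 2) + (C (-β ^ (p ^ 2 - 1)) * X + C (β ^ (p ^ 2 - 1) * α - α ^ (p ^ 2))) := by ring
  have hlt : (C (-β ^ (p ^ 2 - 1)) * X + C (β ^ (p ^ 2 - 1) * α - α ^ (p ^ 2)) : L[X]).degree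
      < ((p ^ 2 : ℕ) : WithBot ℕ) := lt_of_le_of_lt degree_linear_le (by exact_mod_cast hq)
  have hm1 : (X ^ (p ^ 2) + C (-β ^ (p ^ 2 - 1)) * X + C (β ^ (p ^ 2 - 1) * α - α ^ (p ^ 2)) : L[X]).Monic := by
    rw [hfac]; exact monic_X_pow_add hlt
  have hd1 : (X ^ (p ^ 2) + C (-β ^ (p ^ 2 - 1)) * X + C (β ^ (p ^ 2 - 1) * α - α ^ (p ^ 2)) : L[X]).degree = (p ^ 2 : ℕ) := by
    rw [hfac, degree_add_eq_left_of_degree_lt (by rwa [degree_X_pow]), degree_X_pow]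
  have hm2 : (∏ c : k, (X - C (α + i c * β))).Monic := monic_prod_of_monic _ _ fun c _ => monic_X_sub_C _
  have hd2 : (∏ c : k, (X - C (α + i c * β))).degree = ((p ^ 2 : ℕ) : WithBot ℕ) := by
    rw [degree_prod]; simp only [degree_X_sub_C]; simp [hcard]
  have hinj : Function.Injective fun c : k => α + i c * β := by
    intro c d h
    exact i.injective (mul_right_cancel₀ hβ (add_left_cancel h))
  refine Polynomial.eq_of_degree_sub_lt_of_eval_index_eq (Finset.univ : Finset k)
    (hinj.injOn) ?_ ?_
  · refine lt_of_lt_of_eq (degree_sub_lt_left (hd1.trans hd2.symm) hm1.ne_zero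
      (by rw [hm1.leadingCoeff, hm2.leadingCoeff])) ?_
    rw [hd1, Finset.card_univ, hcard]
  · intro c _
    have hr : (∏ c : k, (X - C (α + i c * β))).eval (α + i c * β) = 0 := by
      rw [eval_prod]
      exact Finset.prod_eq_zero (Finset.mem_univ c) (by simp)
    rw [hr]
    have hc : i c ^ (p ^ 2) = i c := by rw [← map_pow, ← hcard, FiniteField.pow_card]
    have hb : β ^ (p ^ 2) = β ^ (p ^ 2 - 1) * β := by rw [← pow_succ]; congr 1; omega
    simp only [eval_add, eval_pow, eval_X, eval_mul, eval_C]
    rw [add_pow_char_pow, mul_pow, hc, hb]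
    ring

/-- the concrete model hypotheses -/
structure Model (q : ℕ) (F K L : Type) [Field F] [Field K] [Field L]
    [Algebra (MvPolynomial (Fin 2) F) K] [Algebra (MvPolynomial (Fin 2) F) L] [Algebra K L] : Prop where
  h0 : algebraMap K L (algebraMap (MvPolynomial (Fin 2) F) K (MvPolynomial.X 0)) =
    algebraMap (MvPolynomial (Fin 2) F) L (MvPolynomial.X 1) ^ (q - 1) *
      algebraMap (MvPolynomial (Fin 2) F) L (MvPolynomial.X 0) -
      algebraMap (MvPolynomial (Fin 2) F) L (MvPolynomial.X 0) ^ q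
  h1 : algebraMap K L (algebraMap (MvPolynomial (Fin 2) F) K (MvPolynomial.X 1)) =
    - algebraMap (MvPolynomial (Fin 2) F) L (MvPolynomial.X 1) ^ (q - 1)
  hC : ∀ c : F, algebraMap K L (algebraMap (MvPolynomial (Fin 2) F) K (MvPolynomial.C c)) =
    algebraMap (MvPolynomial (Fin 2) F) L (MvPolynomial.C c)

theorem hom_ext_aux {F K L : Type} [Field F] [Field K] [Algebra (MvPolynomial (Fin 2) F) K]
    [Field L] [Algebra (MvPolynomial (Fin 2) F) L]
    [IsFractionRing (MvPolynomial (Fin 2) F) L] [Algebra K L] {q : ℕ} (hM : Model q F K L) (s t : L →ₐ[K] L)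
    (h0 : s (algebraMap (MvPolynomial (Fin 2) F) L (MvPolynomial.X 0)) =
      t (algebraMap (MvPolynomial (Fin 2) F) L (MvPolynomial.X 0)))
    (h1 : s (algebraMap (MvPolynomial (Fin 2) F) L (MvPolynomial.X 1)) =
      t (algebraMap (MvPolynomial (Fin 2) F) L (MvPolynomial.X 1))) : s = t := by
  have : (s : L →+* L) = t := by
    apply IsLocalization.ringHom_ext (nonZeroDivisors (MvPolynomial (Fin 2) F))
    apply MvPolynomial.ringHom_ext
    · intro r
      simp [← hM.hC]
    · intro i
      fin_cases i
      · exact h0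
      · exact h1
  ext x
  exact congrArg (fun g : L →+* L => g x) this


theorem theta_aux {k F : Type} [Field k] [Field F] [Algebra k F] (a b : k) (ha : a ≠ 0) :
    Function.Injective (MvPolynomial.aeval (R := F)
    (![MvPolynomial.X 0 + MvPolynomial.C (algebraMap k F b) * MvPolynomial.X 1,
      MvPolynomial.C (algebraMap k F a) * MvPolynomial.X 1] : Fin 2 → MvPolynomial (Fin 2) F)) := by
  let θ : k → k → MvPolynomial (Fin 2) F →ₐ[F] MvPolynomial (Fin 2) F := fun a b =>
    MvPolynomial.aeval ![MvPolynomial.X 0 + MvPolynomial.C (algebraMap k F b) * MvPolynomial.X 1,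
      MvPolynomial.C (algebraMap k F a) * MvPolynomial.X 1]
  have t0 : ∀ a b, θ a b (MvPolynomial.X 0) =
      MvPolynomial.X 0 + MvPolynomial.C (algebraMap k F b) * MvPolynomial.X 1 := by
    intro a b; simp [θ]
  have t1 : ∀ a b, θ a b (MvPolynomial.X 1) =
      MvPolynomial.C (algebraMap k F a) * MvPolynomial.X 1 := by
    intro a b; simp [θ]
  have tC : ∀ a b c, θ a b (MvPolynomial.C c) = MvPolynomial.C c := by
    intro a b c; simp [θ]
  have haF : algebraMap k F a ≠ 0 := by simpa using ha
  have hcomp : (θ a⁻¹ (-(b * a⁻¹))).comp (θ a b) = AlgHom.id F _ := by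
    apply MvPolynomial.algHom_ext
    intro i
    fin_cases i
    · simp only [Fin.zero_eta, AlgHom.comp_apply, t0, t1, tC, map_add, map_mul, map_neg, map_inv₀,
        AlgHom.id_apply]
      ring
    · simp only [Fin.mk_one, AlgHom.comp_apply, t1, tC, map_mul, map_inv₀, AlgHom.id_apply]
      rw [← mul_assoc, ← map_mul, mul_inv_cancel₀ haF, map_one, one_mul]
  exact Function.LeftInverse.injective (g := θ a⁻¹ (-(b * a⁻¹)))
    (fun z => DFunLike.congr_fun hcomp z)

theorem hom_exists_aux1 {k F L : Type} [Field k] [Field F] [Algebra k F]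
    [Field L] [Algebra (MvPolynomial (Fin 2) F) L]
    [IsFractionRing (MvPolynomial (Fin 2) F) L] (a b : k) (ha : a ≠ 0) :
    ∃ s : L →+* L, s (algebraMap (MvPolynomial (Fin 2) F) L (MvPolynomial.X 0)) =
      algebraMap (MvPolynomial (Fin 2) F) L (MvPolynomial.X 0) +
        algebraMap (MvPolynomial (Fin 2) F) L (MvPolynomial.C (algebraMap k F b)) *
        algebraMap (MvPolynomial (Fin 2) F) L (MvPolynomial.X 1) ∧
      s (algebraMap (MvPolynomial (Fin 2) F) L (MvPolynomial.X 1)) =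
        algebraMap (MvPolynomial (Fin 2) F) L (MvPolynomial.C (algebraMap k F a)) *
        algebraMap (MvPolynomial (Fin 2) F) L (MvPolynomial.X 1) ∧
      ∀ c, s (algebraMap (MvPolynomial (Fin 2) F) L (MvPolynomial.C c)) =
        algebraMap (MvPolynomial (Fin 2) F) L (MvPolynomial.C c) := by
  have hθ := theta_aux (F := F) a b ha
  let g : MvPolynomial (Fin 2) F →+* L := (algebraMap (MvPolynomial (Fin 2) F) L).comp
    (MvPolynomial.aeval (R := F)
    (![MvPolynomial.X 0 + MvPolynomial.C (algebraMap k F b) * MvPolynomial.X 1,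
      MvPolynomial.C (algebraMap k F a) * MvPolynomial.X 1] : Fin 2 → MvPolynomial (Fin 2) F)).toRingHom
  have hinj : Function.Injective g :=
    (IsFractionRing.injective (MvPolynomial (Fin 2) F) L).comp hθ
  refine ⟨IsFractionRing.lift hinj, ?_, ?_, fun c => ?_⟩ <;>
  · rw [IsFractionRing.lift_algebraMap]
    simp [g]

theorem hom_exists_aux {p : ℕ} (hp : p.Prime)
    {k : Type} [Field k] [Fintype k] (hcard : Fintype.card k = p ^ 2)
    {F K L : Type} [Field F] [Algebra k F] [Field K] [Algebra (MvPolynomial (Fin 2) F) K]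
    [IsFractionRing (MvPolynomial (Fin 2) F) K]
    [Field L] [Algebra (MvPolynomial (Fin 2) F) L]
    [IsFractionRing (MvPolynomial (Fin 2) F) L] [Algebra K L] [CharP L p]
    (hM : Model (p ^ 2) F K L) (a b : k) (ha : a ≠ 0) :
    ∃ s : L →ₐ[K] L, s (algebraMap (MvPolynomial (Fin 2) F) L (MvPolynomial.X 0)) =
      algebraMap (MvPolynomial (Fin 2) F) L (MvPolynomial.X 0) +
        algebraMap (MvPolynomial (Fin 2) F) L (MvPolynomial.C (algebraMap k F b)) *
        algebraMap (MvPolynomial (Fin 2) F) L (MvPolynomial.X 1) ∧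
      s (algebraMap (MvPolynomial (Fin 2) F) L (MvPolynomial.X 1)) =
        algebraMap (MvPolynomial (Fin 2) F) L (MvPolynomial.C (algebraMap k F a)) *
        algebraMap (MvPolynomial (Fin 2) F) L (MvPolynomial.X 1) := by
  have := Fact.mk hp
  obtain ⟨s, e0, e1, eC⟩ := hom_exists_aux1 (F := F) (L := L) a b ha
  let i : k →+* L := (algebraMap (MvPolynomial (Fin 2) F) L).comp
    (MvPolynomial.C.comp (algebraMap k F))
  have hi : ∀ c, algebraMap (MvPolynomial (Fin 2) F) L (MvPolynomial.C (algebraMap k F c)) = i c :=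
    fun c => rfl
  have hq : 2 ≤ p ^ 2 := by nlinarith [hp.two_le]
  have ha1 : i a ^ (p ^ 2 - 1) = 1 := by
    rw [← map_pow, ← hcard, FiniteField.pow_card_sub_one_eq_one a ha, map_one]
  have hb1 : i b ^ (p ^ 2) = i b := by rw [← map_pow, ← hcard, FiniteField.pow_card]
  have hcomm : s.comp (algebraMap K L) = algebraMap K L := by
    apply IsLocalization.ringHom_ext (nonZeroDivisors (MvPolynomial (Fin 2) F))
    apply MvPolynomial.ringHom_ext
    · intro r
      simp only [RingHom.comp_apply, hM.hC, eC]
    · intro j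
      fin_cases j
      · simp only [RingHom.comp_apply, Fin.zero_eta, hM.h0, map_sub, map_mul, map_pow, e0, e1, hi]
        generalize algebraMap (MvPolynomial (Fin 2) F) L (MvPolynomial.X 0) = α
        generalize algebraMap (MvPolynomial (Fin 2) F) L (MvPolynomial.X 1) = β
        have hb : β ^ (p ^ 2) = β ^ (p ^ 2 - 1) * β := by rw [← pow_succ]; congr 1; omega
        rw [add_pow_char_pow, mul_pow, mul_pow, ha1, hb1, hb]
        ring
      · simp only [RingHom.comp_apply, Fin.mk_one, hM.h1, map_neg, map_pow, e1, hi, mul_pow, ha1, one_mul]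
  exact ⟨⟨s, fun x => DFunLike.congr_fun hcomm x⟩, e0, e1⟩

/-- the affine map x ↦ a x + b -/
def mkAff {k : Type} [Field k] (a : kˣ) (b : k) : k ≃ᵃ[k] k :=
  (LinearEquiv.smulOfUnit a).toAffineEquiv.trans (AffineEquiv.constVAdd k k b)

theorem mkAff_apply {k : Type} [Field k] (a : kˣ) (b x : k) : mkAff a b x = b + a * x := by
  simp only [mkAff, AffineEquiv.trans_apply, AffineEquiv.constVAdd_apply, vadd_eq_add]
  rfl

theorem aff_form {k : Type} [Field k] (e : k ≃ᵃ[k] k) : ∃ (a : kˣ) (b : k), e = mkAff a b := by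
  have h1 : ∀ x, e x = e.linear x + e 0 := by
    intro x
    have := e.map_vadd 0 x
    simpa using this
  have h2 : ∀ x, e.linear x = e.linear 1 * x := by
    intro x
    have := e.linear.map_smul x 1
    simp only [smul_eq_mul, mul_one] at this
    rw [this, mul_comm]
  have h3 : e.linear 1 ≠ 0 := by
    rw [Ne, e.linear.map_eq_zero_iff]; exact one_ne_zero
  refine ⟨Units.mk0 _ h3, e 0, ?_⟩
  ext x
  rw [mkAff_apply, h1, h2, Units.val_mk0, add_comm]

theorem card_aff {k : Type} [Field k] [Fintype k] :
    Nat.card (k ≃ᵃ[k] k) = Fintype.card k * (Fintype.card k - 1) := by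
  have hb : Function.Bijective (fun z : kˣ × k => mkAff z.1 z.2) := by
    constructor
    · rintro ⟨a, b⟩ ⟨a', b'⟩ h
      have h0 := DFunLike.congr_fun h (0 : k)
      have h1 := DFunLike.congr_fun h (1 : k)
      simp only [mkAff_apply, mul_zero, add_zero, mul_one] at h0 h1
      rw [h0] at h1
      exact Prod.ext (Units.ext (add_left_cancel h1)) h0
    · intro e
      obtain ⟨a, b, h⟩ := aff_form e
      exact ⟨(a, b), h.symm⟩
  rw [← Nat.card_eq_of_bijective _ hb, Nat.card_prod, Nat.card_units, Nat.card_eq_fintype_card,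
    mul_comm]

theorem map_factor {p : ℕ} (hp : p.Prime)
    {k : Type} [Field k] [Fintype k] (hcard : Fintype.card k = p ^ 2)
    {F K L : Type} [Field F] [Algebra k F] [Field K] [Algebra (MvPolynomial (Fin 2) F) K]
    [Field L] [Algebra (MvPolynomial (Fin 2) F) L]
    [IsFractionRing (MvPolynomial (Fin 2) F) L] [Algebra K L] [CharP L p]
    (hM : Model (p ^ 2) F K L) {f : K[X]}
    (hf : f = Polynomial.X ^ (p ^ 2) +
        Polynomial.C (algebraMap (MvPolynomial (Fin 2) F) K (MvPolynomial.X 1)) *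
          Polynomial.X +
        Polynomial.C (algebraMap (MvPolynomial (Fin 2) F) K (MvPolynomial.X 0))) :
    f.map (algebraMap K L) = ∏ c : k, (X - C (algebraMap (MvPolynomial (Fin 2) F) L
      (MvPolynomial.X 0 + MvPolynomial.C (algebraMap k F c) * MvPolynomial.X 1))) := by
  let i : k →+* L := (algebraMap (MvPolynomial (Fin 2) F) L).comp
    (MvPolynomial.C.comp (algebraMap k F))
  have h := factor_aux p hp hcard i (algebraMap (MvPolynomial (Fin 2) F) L (MvPolynomial.X 0))
    (algebraMap (MvPolynomial (Fin 2) F) L (MvPolynomial.X 1)) (by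
      rw [Ne, FaithfulSMul.algebraMap_eq_zero_iff]
      exact MvPolynomial.X_ne_zero 1)
  rw [hf]
  simp only [Polynomial.map_add, Polynomial.map_mul, Polynomial.map_pow, Polynomial.map_X,
    Polynomial.map_C, hM.h0, hM.h1]
  rw [h]
  simp [i]

theorem model_split {p : ℕ} (hp : p.Prime)
    {k : Type} [Field k] [Fintype k] (hcard : Fintype.card k = p ^ 2)
    {F K L : Type} [Field F] [Algebra k F] [Field K] [Algebra (MvPolynomial (Fin 2) F) K]
    [Field L] [Algebra (MvPolynomial (Fin 2) F) L]
    [IsFractionRing (MvPolynomial (Fin 2) F) L] [Algebra K L] [CharP L p]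
    (hM : Model (p ^ 2) F K L) {f : K[X]}
    (hf : f = Polynomial.X ^ (p ^ 2) +
        Polynomial.C (algebraMap (MvPolynomial (Fin 2) F) K (MvPolynomial.X 1)) *
          Polynomial.X +
        Polynomial.C (algebraMap (MvPolynomial (Fin 2) F) K (MvPolynomial.X 0))) :
    f.IsSplittingField K L := by
  have hfac := map_factor hp hcard hM hf
  have hm : (f.map (algebraMap K L)).Monic := by
    rw [hfac]; exact monic_prod_of_monic _ _ fun c _ => monic_X_sub_C _
  have hf0 : f ≠ 0 := by
    rintro rfl
    simp at hm
  rw [isSplittingField_iff_intermediateField]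
  refine ⟨?_, ?_⟩
  · rw [hfac]
    exact Splits.prod fun c _ => Splits.X_sub_C _
  · set E := IntermediateField.adjoin K (f.rootSet L) with hE
    have hr : ∀ c : k, algebraMap (MvPolynomial (Fin 2) F) L
      (MvPolynomial.X 0 + MvPolynomial.C (algebraMap k F c) * MvPolynomial.X 1) ∈ E := by
      intro c
      apply IntermediateField.subset_adjoin
      rw [mem_rootSet]
      refine ⟨hf0, ?_⟩
      rw [aeval_def, ← eval_map, hfac, eval_prod]
      exact Finset.prod_eq_zero (Finset.mem_univ c) (by simp)
    have m0 : algebraMap (MvPolynomial (Fin 2) F) L (MvPolynomial.X 0) ∈ E := by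
      simpa using hr 0
    have m1 : algebraMap (MvPolynomial (Fin 2) F) L (MvPolynomial.X 1) ∈ E := by
      have := E.sub_mem (hr 1) m0
      simpa using this
    have mR : ∀ z : MvPolynomial (Fin 2) F, algebraMap (MvPolynomial (Fin 2) F) L z ∈ E := by
      intro z
      induction z using MvPolynomial.induction_on with
      | C a => rw [← hM.hC]; exact E.algebraMap_mem _
      | add y z hy hz => rw [map_add]; exact E.add_mem hy hz
      | mul_X y j hy =>
        rw [map_mul]
        refine E.mul_mem hy ?_
        fin_cases j
        · exact m0
        · exact m1
    rw [eq_top_iff]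
    intro z _
    obtain ⟨x, y, _, rfl⟩ := IsFractionRing.div_surjective (A := MvPolynomial (Fin 2) F) z
    exact E.div_mem (mR x) (mR y)

theorem model_gal {p : ℕ} (hp : p.Prime)
    {k : Type} [Field k] [Fintype k] (hcard : Fintype.card k = p ^ 2)
    {F K L : Type} [Field F] [Algebra k F] [Field K] [Algebra (MvPolynomial (Fin 2) F) K]
    [IsFractionRing (MvPolynomial (Fin 2) F) K]
    [Field L] [Algebra (MvPolynomial (Fin 2) F) L]
    [IsFractionRing (MvPolynomial (Fin 2) F) L] [Algebra K L] [CharP L p]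
    (hM : Model (p ^ 2) F K L) {f : K[X]}
    (hf : f = Polynomial.X ^ (p ^ 2) +
        Polynomial.C (algebraMap (MvPolynomial (Fin 2) F) K (MvPolynomial.X 1)) *
          Polynomial.X +
        Polynomial.C (algebraMap (MvPolynomial (Fin 2) F) K (MvPolynomial.X 0))) :
    Nonempty ((L ≃ₐ[K] L) ≃* (k ≃ᵃ[k] k)) := by
  have hfac := map_factor hp hcard hM hf
  have hspl := model_split hp hcard hM hf
  have hfin : FiniteDimensional K L := hspl.finiteDimensional L f
  let i : k →+* L := (algebraMap (MvPolynomial (Fin 2) F) L).comp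
    (MvPolynomial.C.comp (algebraMap k F))
  have hi : ∀ c, algebraMap (MvPolynomial (Fin 2) F) L (MvPolynomial.C (algebraMap k F c)) = i c :=
    fun c => rfl
  have hi' : ∀ (s : L ≃ₐ[K] L) c, s (i c) = i c := by
    intro s c
    rw [← hi, ← hM.hC, s.commutes]
  have hex : ∀ (a b : k) (ha : a ≠ 0), ∃ s : L ≃ₐ[K] L,
      s (algebraMap (MvPolynomial (Fin 2) F) L (MvPolynomial.X 0)) =
      algebraMap (MvPolynomial (Fin 2) F) L (MvPolynomial.X 0) +
        i b * algebraMap (MvPolynomial (Fin 2) F) L (MvPolynomial.X 1) ∧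
      s (algebraMap (MvPolynomial (Fin 2) F) L (MvPolynomial.X 1)) =
        i a * algebraMap (MvPolynomial (Fin 2) F) L (MvPolynomial.X 1) := by
    intro a b ha
    obtain ⟨s, h0, h1⟩ := hom_exists_aux hp hcard hM a b ha
    exact ⟨AlgEquiv.ofBijective s (Algebra.IsAlgebraic.algHom_bijective s), h0, h1⟩
  have hext : ∀ s t : L ≃ₐ[K] L,
      s (algebraMap (MvPolynomial (Fin 2) F) L (MvPolynomial.X 0)) =
      t (algebraMap (MvPolynomial (Fin 2) F) L (MvPolynomial.X 0)) →
      s (algebraMap (MvPolynomial (Fin 2) F) L (MvPolynomial.X 1)) =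
      t (algebraMap (MvPolynomial (Fin 2) F) L (MvPolynomial.X 1)) → s = t := by
    intro s t h0 h1
    have := hom_ext_aux hM (s : L →ₐ[K] L) t h0 h1
    ext x
    exact DFunLike.congr_fun this x
  have hroot : ∀ s : L ≃ₐ[K] L, ∀ c : k, ∃ d : k,
      s (algebraMap (MvPolynomial (Fin 2) F) L (MvPolynomial.X 0) +
        i c * algebraMap (MvPolynomial (Fin 2) F) L (MvPolynomial.X 1)) =
      algebraMap (MvPolynomial (Fin 2) F) L (MvPolynomial.X 0) +
        i d * algebraMap (MvPolynomial (Fin 2) F) L (MvPolynomial.X 1) := by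
    intro s c
    set r := algebraMap (MvPolynomial (Fin 2) F) L (MvPolynomial.X 0) +
        i c * algebraMap (MvPolynomial (Fin 2) F) L (MvPolynomial.X 1) with hr
    have h1 : aeval r f = 0 := by
      rw [aeval_def, ← eval_map, hfac, eval_prod]
      exact Finset.prod_eq_zero (Finset.mem_univ c) (by simp [hr, hi])
    have h2 : aeval (s r) f = 0 := by
      have := aeval_algHom_apply (s : L →ₐ[K] L) r f
      rw [h1, map_zero] at this
      exact this
    rw [aeval_def, ← eval_map, hfac, eval_prod, Finset.prod_eq_zero_iff] at h2
    obtain ⟨d, _, hd⟩ := h2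
    refine ⟨d, ?_⟩
    rw [eval_sub, eval_X, eval_C] at hd
    rw [sub_eq_zero.1 hd, map_add, map_mul, hi]
  have hβ : algebraMap (MvPolynomial (Fin 2) F) L (MvPolynomial.X 1) ≠ 0 := by
    rw [Ne, FaithfulSMul.algebraMap_eq_zero_iff]
    exact MvPolynomial.X_ne_zero 1
  clear hfac
  generalize algebraMap (MvPolynomial (Fin 2) F) L (MvPolynomial.X 0) = α at *
  generalize algebraMap (MvPolynomial (Fin 2) F) L (MvPolynomial.X 1) = β at *
  have hex2 : ∀ e : k ≃ᵃ[k] k, ∃ s : L ≃ₐ[K] L, ∀ x, s (α + i x * β) = α + i (e x) * β := by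
    intro e
    obtain ⟨a, b, rfl⟩ := aff_form e
    obtain ⟨s, h0, h1⟩ := hex a b a.ne_zero
    refine ⟨s, fun x => ?_⟩
    rw [mkAff_apply, map_add, map_mul, h0, h1, hi', map_add, map_mul]
    ring
  have hext2 : ∀ s t : L ≃ₐ[K] L, (∀ x, s (α + i x * β) = t (α + i x * β)) → s = t := by
    intro s t h
    have h0 := h 0
    have h1 := h 1
    simp only [map_zero, zero_mul, add_zero, map_one, one_mul] at h0 h1
    rw [map_add, map_add, h0] at h1
    exact hext s t h0 (add_left_cancel h1)
  have hinj : ∀ c d, α + i c * β = α + i d * β → c = d := fun c d h =>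
    i.injective (mul_right_cancel₀ hβ (add_left_cancel h))
  choose S hS using hex2
  let Φ : (k ≃ᵃ[k] k) →* (L ≃ₐ[K] L) := MonoidHom.mk' S (by
    intro e e'
    apply hext2
    intro x
    rw [AlgEquiv.mul_apply, hS, hS, hS]
    rfl)
  refine ⟨(MulEquiv.ofBijective Φ ⟨?_, ?_⟩).symm⟩
  · intro e e' h
    ext x
    apply hinj
    rw [← hS, ← hS]
    exact DFunLike.congr_fun h _
  · intro s
    obtain ⟨b, hb⟩ := hroot s 0
    obtain ⟨d, hd⟩ := hroot s 1
    simp only [map_zero, zero_mul, add_zero, map_one, one_mul] at hb hd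
    have h1 : s β = i (d - b) * β := by
      rw [map_add, hb] at hd
      rw [map_sub]
      linear_combination hd
    have hne : d - b ≠ 0 := by
      intro h
      rw [h, map_zero, zero_mul, map_eq_zero] at h1
      exact hβ h1
    refine ⟨mkAff (Units.mk0 _ hne) b, ?_⟩
    apply hext2
    intro x
    change S _ _ = _
    rw [hS, mkAff_apply, map_add s, map_mul s, hb, h1, hi', Units.val_mk0, map_add, map_mul]
    ring

theorem exists_model {q : ℕ} (hq : 2 ≤ q) (F K : Type) [Field F] [Field K]
    [Algebra (MvPolynomial (Fin 2) F) K] [IsFractionRing (MvPolynomial (Fin 2) F) K] :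
    ∃ (L : Type) (_ : Field L) (_ : Algebra (MvPolynomial (Fin 2) F) L)
      (_ : IsFractionRing (MvPolynomial (Fin 2) F) L) (_ : Algebra K L), Model q F K L := by
  have hφ := phi_inj F q hq
  let g : MvPolynomial (Fin 2) F →+* FractionRing (MvPolynomial (Fin 2) F) :=
    (algebraMap (MvPolynomial (Fin 2) F) (FractionRing (MvPolynomial (Fin 2) F))).comp
    (MvPolynomial.aeval (R := F)
      (![MvPolynomial.X 1 ^ (q - 1) * MvPolynomial.X 0 - MvPolynomial.X 0 ^ q,
        - MvPolynomial.X 1 ^ (q - 1)] : Fin 2 → MvPolynomial (Fin 2) F)).toRingHom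
  have hinj : Function.Injective g :=
    (IsFractionRing.injective (MvPolynomial (Fin 2) F)
      (FractionRing (MvPolynomial (Fin 2) F))).comp hφ
  let h : K →+* FractionRing (MvPolynomial (Fin 2) F) := IsFractionRing.lift hinj
  have hh : ∀ z, h (algebraMap _ K z) = g z := fun z => IsFractionRing.lift_algebraMap hinj z
  let _ : Algebra K (FractionRing (MvPolynomial (Fin 2) F)) := h.toAlgebra
  refine ⟨FractionRing (MvPolynomial (Fin 2) F), inferInstance, inferInstance, inferInstance,
    inferInstance, ⟨?_, ?_, ?_⟩⟩
  · change h _ = _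
    rw [hh]; simp [g]
  · change h _ = _
    rw [hh]; simp [g]
  · intro c
    change h _ = _
    rw [hh]; simp [g]

theorem sep_aux {K : Type} [Field K] (h2 : (2 : K) ≠ 0) {q : ℕ} (hq : (q : K) = 0) (hq0 : q ≠ 0)
    (a0 a1 : K) (ha0 : a0 ≠ 0) (ha1 : a1 ≠ 0) :
    ((X ^ q + C a1 * X + C a0 : K[X]).comp (-(X ^ 2))).Separable := by
  rw [Polynomial.separable_def]
  have hd : derivative ((X ^ q + C a1 * X + C a0 : K[X]).comp (-(X ^ 2))) = C (-2 * a1) * X := by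
    rw [derivative_comp]
    simp only [derivative_add, derivative_X_pow, hq, derivative_mul, derivative_C, derivative_X,
      derivative_neg, map_zero, zero_mul, zero_add, mul_one, add_zero, C_comp, C_mul, C_neg]
    simp only [Nat.cast_ofNat]
    ring
  rw [hd]
  obtain ⟨n, rfl⟩ : ∃ n, q = n + 1 := ⟨q - 1, by omega⟩
  have hg : (X ^ (n + 1) + C a1 * X + C a0 : K[X]).comp (-(X ^ 2)) =
      C a0 + ((-(X ^ 2)) ^ n * (-X) - C a1 * X) * X := by
    simp
    ring
  rw [hg]
  refine ⟨C a0⁻¹, - C a0⁻¹ * C (-2 * a1)⁻¹ * ((-(X ^ 2)) ^ n * (-X) - C a1 * X), ?_⟩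
  have e0 : (C a0⁻¹ * C a0 : K[X]) = 1 := by rw [← C_mul, inv_mul_cancel₀ ha0, C_1]
  have e1 : (C (-2 * a1)⁻¹ * C (-2 * a1) : K[X]) = 1 := by
    rw [← C_mul, inv_mul_cancel₀ (mul_ne_zero (neg_ne_zero.2 h2) ha1), C_1]
  linear_combination e0 - C a0⁻¹ * ((-(X ^ 2)) ^ n * (-X) - C a1 * X) * X * e1

/-- the degree of the second splitting field over the first -/
theorem model_second {p : ℕ} (hp : p.Prime) (hodd : Odd p)
    {k : Type} [Field k] [Fintype k] (hcard : Fintype.card k = p ^ 2)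
    {F K L M : Type} [Field F] [Algebra k F] [Field K] [Algebra (MvPolynomial (Fin 2) F) K]
    [Field L] [Algebra (MvPolynomial (Fin 2) F) L]
    [IsFractionRing (MvPolynomial (Fin 2) F) L] [Algebra K L] [CharP L p]
    (hM : Model (p ^ 2) F K L) {f : K[X]}
    (hf : f = Polynomial.X ^ (p ^ 2) +
        Polynomial.C (algebraMap (MvPolynomial (Fin 2) F) K (MvPolynomial.X 1)) *
          Polynomial.X +
        Polynomial.C (algebraMap (MvPolynomial (Fin 2) F) K (MvPolynomial.X 0)))
    [Field M] [Algebra K M] [Algebra L M] [IsScalarTower K L M]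
    (hspl : IsSplittingField K M (f.comp (-(X ^ 2)))) :
    Module.finrank L M = 2 ^ (p ^ 2) := by
  classical
  have hfac := map_factor hp hcard hM hf
  have h2L : (2 : L) ≠ 0 := by
    have := (CharP.cast_eq_zero_iff L p 2).not
    rw [Nat.cast_ofNat] at this
    rw [Ne, this]
    intro h
    rw [(Nat.prime_dvd_prime_iff_eq hp Nat.prime_two).1 h] at hodd
    exact absurd hodd (by decide)
  have h2 : (2 : M) ≠ 0 := by
    rw [← map_ofNat (algebraMap L M) 2, Ne, map_eq_zero]; exact h2L
  set r : k → L := fun c => algebraMap (MvPolynomial (Fin 2) F) L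
      (MvPolynomial.X 0 + MvPolynomial.C (algebraMap k F c) * MvPolynomial.X 1) with hr
  have hgfac : (f.comp (-(X ^ 2))).map (algebraMap K M) =
      ∏ c : k, -(X ^ 2 - C (-(algebraMap L M (r c)))) := by
    rw [Polynomial.map_comp, IsScalarTower.algebraMap_eq K L M, ← Polynomial.map_map, hfac,
      Polynomial.map_prod, Polynomial.prod_comp]
    refine Finset.prod_congr rfl fun c _ => ?_
    rw [Polynomial.map_sub, Polynomial.map_X, Polynomial.map_C, sub_comp, X_comp, C_comp]
    simp only [Polynomial.map_neg, Polynomial.map_pow, Polynomial.map_X, C_neg]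
    ring
  have hne : ∀ c : k, -(X ^ 2 - C (-(algebraMap L M (r c)))) ≠ 0 := fun c =>
    neg_ne_zero.2 (monic_X_pow_sub_C _ two_ne_zero).ne_zero
  have hx : ∀ c : k, ∃ x : M, x ^ 2 = algebraMap L M (-(r c)) := by
    intro c
    have h1 := hspl.splits'
    rw [hgfac, splits_prod_iff (fun i _ => hne i)] at h1
    obtain ⟨x, hx⟩ := (h1 c (Finset.mem_univ c)).exists_eval_eq_zero (by
      rw [degree_neg, degree_X_pow_sub_C (by norm_num)]; norm_num)
    refine ⟨x, ?_⟩
    simp only [eval_neg, eval_sub, eval_pow, eval_X, eval_C] at hx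
    rw [map_neg]
    linear_combination -hx
  choose x hx using hx
  have := multiquad h2 x Finset.univ L (fun c => -(r c)) (fun c _ => hx c)
    (fun t _ ht => nonsq_aux t ht) (by
      rw [eq_top_iff]
      intro y _
      have hy : y ∈ Algebra.adjoin K ((f.comp (-(X ^ 2))).rootSet M) := by
        rw [hspl.adjoin_rootSet']; trivial
      induction hy using Algebra.adjoin_induction with
      | mem y hy =>
        have h1 := (mem_rootSet'.1 hy).2
        rw [aeval_def, ← eval_map, hgfac, eval_prod, Finset.prod_eq_zero_iff] at h1
        obtain ⟨c, _, hc⟩ := h1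
        simp only [eval_neg, eval_sub, eval_pow, eval_X, eval_C] at hc
        have hxc := hx c
        rw [map_neg] at hxc
        have hxm : x c ∈ IntermediateField.adjoin L (Set.image x ((Finset.univ : Finset k) : Set k)) :=
          IntermediateField.subset_adjoin _ _ ⟨c, by simp, rfl⟩
        rcases sq_eq_sq_iff_eq_or_eq_neg.1 (show y ^ 2 = x c ^ 2 by linear_combination -hc - hxc) with h | h
        · rw [h]; exact hxm
        · rw [h]; exact neg_mem hxm
      | algebraMap z =>
        rw [IsScalarTower.algebraMap_apply K L M]
        exact IntermediateField.algebraMap_mem _ _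
      | add a b _ _ ha hb => exact add_mem (ha trivial) (hb trivial)
      | mul a b _ _ ha hb => exact mul_mem (ha trivial) (hb trivial))
  rw [this, Finset.card_univ, hcard]

/-- Let `p` be an odd prime, `k` the field with `p²` elements, `F` an extension of `k`,
`K = F(A₀, A₁)` and `f = T^(p²) + A₁T + A₀ ∈ K[T]`. Then `Gal(f|K) ≅ Aff(k)` (the group
of affine transformations of `k`, of order `p²(p² - 1)`), and the Galois group of
`f(-T²)` over `K` has order `2^(p²)·p²·(p² - 1)`. -/
theorem generic_galois_group_artin_schreier_like
    (p : ℕ) (hp : p.Prime) (hodd : Odd p)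
    (k : Type) [Field k] [Fintype k] (hcard : Fintype.card k = p ^ 2)
    (F : Type) [Field F] [Algebra k F]
    (K : Type) [Field K] [Algebra (MvPolynomial (Fin 2) F) K]
    [IsFractionRing (MvPolynomial (Fin 2) F) K]
    (f : Polynomial K)
    (hf : f = Polynomial.X ^ (p ^ 2) +
        Polynomial.C (algebraMap (MvPolynomial (Fin 2) F) K (MvPolynomial.X 1)) *
          Polynomial.X +
        Polynomial.C (algebraMap (MvPolynomial (Fin 2) F) K (MvPolynomial.X 0))) :
    Nat.card (k ≃ᵃ[k] k) = p ^ 2 * (p ^ 2 - 1) ∧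
    (∀ (L : Type) [Field L] [Algebra K L], Polynomial.IsSplittingField K L f →
      Nonempty ((L ≃ₐ[K] L) ≃* (k ≃ᵃ[k] k))) ∧
    (∀ (M : Type) [Field M] [Algebra K M],
      Polynomial.IsSplittingField K M (f.comp (-(Polynomial.X ^ 2))) →
      Nat.card (M ≃ₐ[K] M) = 2 ^ (p ^ 2) * (p ^ 2 * (p ^ 2 - 1))) := by
  have hfact := Fact.mk hp
  have hq : 2 ≤ p ^ 2 := by nlinarith [hp.two_le]
  have hcardAff : Nat.card (k ≃ᵃ[k] k) = p ^ 2 * (p ^ 2 - 1) := by rw [card_aff, hcard]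
  have hck : CharP k p := charP_of_card_eq_prime_pow hcard
  have hcF : CharP F p := charP_of_injective_ringHom (algebraMap k F).injective p
  have hcR : CharP (MvPolynomial (Fin 2) F) p :=
    charP_of_injective_ringHom (MvPolynomial.C_injective (Fin 2) F) p
  have hcK : CharP K p :=
    charP_of_injective_ringHom (IsFractionRing.injective (MvPolynomial (Fin 2) F) K) p
  obtain ⟨L0, _, _, _, _, hM⟩ := exists_model hq F K
  have hcL : CharP L0 p :=
    charP_of_injective_ringHom (IsFractionRing.injective (MvPolynomial (Fin 2) F) L0) p
  have hspl0 := model_split hp hcard hM hf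
  obtain ⟨iso⟩ := model_gal hp hcard hM hf
  have ha1 : algebraMap (MvPolynomial (Fin 2) F) K (MvPolynomial.X 1) ≠ 0 := by
    rw [Ne, FaithfulSMul.algebraMap_eq_zero_iff]
    exact MvPolynomial.X_ne_zero 1
  have ha0 : algebraMap (MvPolynomial (Fin 2) F) K (MvPolynomial.X 0) ≠ 0 := by
    rw [Ne, FaithfulSMul.algebraMap_eq_zero_iff]
    exact MvPolynomial.X_ne_zero 0
  have hqK : ((p ^ 2 : ℕ) : K) = 0 := by
    rw [CharP.cast_eq_zero_iff K p]; exact dvd_pow_self p two_ne_zero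
  refine ⟨hcardAff, ?_, ?_⟩
  · intro L _ _ hL
    let e : L ≃ₐ[K] L0 := (IsSplittingField.algEquiv L f).trans (IsSplittingField.algEquiv L0 f).symm
    exact ⟨e.autCongr.trans iso⟩
  · intro M _ _ hMs
    have hfM : (f.map (algebraMap K M)).Splits := by
      have h1 := Gal.splits_in_splittingField_of_comp f (-(X ^ 2)) (by
        rw [natDegree_neg, natDegree_X_pow]; norm_num)
      let e := (IsSplittingField.algEquiv M (f.comp (-(X ^ 2)))).symm
      have h2 := h1.map (e : (f.comp (-(X ^ 2))).SplittingField →ₐ[K] M).toRingHom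
      rw [Polynomial.map_map] at h2
      have h3 : (e : (f.comp (-(X ^ 2))).SplittingField →ₐ[K] M).toRingHom.comp
          (algebraMap K _) = algebraMap K M :=
        AlgHom.comp_algebraMap (e : (f.comp (-(X ^ 2))).SplittingField →ₐ[K] M)
      rwa [h3] at h2
    let j : L0 →ₐ[K] M := IsSplittingField.lift L0 f hfM
    let _ : Algebra L0 M := j.toRingHom.toAlgebra
    have _ : IsScalarTower K L0 M := IsScalarTower.of_algebraMap_eq fun x => (j.commutes x).symm
    have hdeg := model_second hp hodd hcard hM hf hMs
    have h2 : (2 : K) ≠ 0 := by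
      have := (CharP.cast_eq_zero_iff K p 2).not
      rw [Nat.cast_ofNat] at this
      rw [Ne, this]
      intro h
      rw [(Nat.prime_dvd_prime_iff_eq hp Nat.prime_two).1 h] at hodd
      exact absurd hodd (by decide)
    have hsepg : (f.comp (-(X ^ 2))).Separable := by
      rw [hf]; exact sep_aux h2 hqK (by omega) _ _ ha0 ha1
    have hsepf : f.Separable := by
      rw [Polynomial.separable_def]
      have hd : derivative f = C (algebraMap (MvPolynomial (Fin 2) F) K (MvPolynomial.X 1)) := by
        rw [hf]
        simp only [derivative_add, derivative_X_pow, hqK, derivative_mul, derivative_C,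
          derivative_X, map_zero, zero_mul, zero_add, mul_one, add_zero]
      rw [hd]
      exact (isCoprime_one_right.of_isCoprime_of_dvd_right
        (isUnit_iff_dvd_one.1 (isUnit_C.2 (isUnit_iff_ne_zero.2 ha1))))
    have g1 : IsGalois K M := IsGalois.of_separable_splitting_field hsepg
    have g0 : IsGalois K L0 := IsGalois.of_separable_splitting_field hsepf
    have f1 : FiniteDimensional K M := hMs.finiteDimensional M _
    have f0 : FiniteDimensional K L0 := hspl0.finiteDimensional L0 f
    rw [IsGalois.card_aut_eq_finrank, ← Module.finrank_mul_finrank K L0 M, hdeg,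
      ← IsGalois.card_aut_eq_finrank K L0, Nat.card_congr iso.toEquiv, hcardAff, mul_comm]
end

section
/- Let p be an odd prime and define c_p = 1/(2^{p²} p² (p² − 1)) + 1/(2^p p²) + (1/(2^{p²}(p² − 1))) · ∑_{d ∣ p²−1, d ≠ 1} 2^{(p²−1)(d−1)/d} φ(d), where φ is Euler's totient function. Then c_p ≥ φ(p² − 1)/(4(p² − 1)). -/
/-- For an odd prime `p`, the constant `c_p` satisfies
`c_p ≥ φ(p² - 1)/(4(p² - 1))`. -/
theorem landauShortIntervalConstant_lower_bound (p : ℕ) (hp : p.Prime) (hodd : Odd p) :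
    landauShortIntervalConstant p ≥
      (Nat.totient (p ^ 2 - 1) : ℝ) / (4 * ((p : ℝ) ^ 2 - 1)) := by
  have h3 : 3 ≤ p := by
    have := hp.two_le
    rcases hodd with ⟨k, rfl⟩
    omega
  have h9 : 9 ≤ p ^ 2 := by nlinarith
  obtain ⟨m, hm⟩ : ∃ m, p ^ 2 = m + 2 := ⟨p ^ 2 - 2, by omega⟩
  have hmR : (p : ℝ) ^ 2 = (m : ℝ) + 2 := by exact_mod_cast hm
  have hpR : (0 : ℝ) < p := by exact_mod_cast hp.pos
  unfold landauShortIntervalConstant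
  have hn : p ^ 2 - 1 = m + 1 := by omega
  have hpos : (0 : ℝ) < (m : ℝ) + 1 := by positivity
  rw [hn, hmR, hm, show (m : ℝ) + 2 - 1 = m + 1 by ring]
  have hmem : m + 1 ∈ (m + 1).divisors.erase 1 := by
    simp
    omega
  have hs := Finset.single_le_sum
    (f := fun d : ℕ => (2 : ℝ) ^ ((m + 1) * (d - 1) / d) * (Nat.totient d : ℝ))
    (fun i _ => by positivity) hmem
  simp only [Nat.add_sub_cancel] at hs
  rw [Nat.mul_div_cancel_left m (Nat.succ_pos m)] at hs
  have h1 := mul_le_mul_of_nonneg_left hs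
    (show (0 : ℝ) ≤ 1 / (2 ^ (m + 2) * ((m : ℝ) + 1)) by positivity)
  have h2 : 1 / (2 ^ (m + 2) * ((m : ℝ) + 1)) * (2 ^ m * (Nat.totient (m + 1) : ℝ))
      = (Nat.totient (m + 1) : ℝ) / (4 * ((m : ℝ) + 1)) := by
    rw [pow_add]
    field_simp
    norm_num
  rw [h2] at h1
  have h4 : (0 : ℝ) ≤ 1 / (2 ^ (m + 2) * ((m : ℝ) + 2) * ((m : ℝ) + 1)) := by positivity
  have h5 : (0 : ℝ) ≤ 1 / (2 ^ p * ((m : ℝ) + 2)) := by positivity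
  linarith
end
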